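/- Let (Δ,Φ) be a Lorentzian based root system with root basis Δ. Then the following are equivalent: (a) (Δ,Φ) has level 2; (b) the orbit Ω contains a space-like vector, and any two space-like vectors x, y ∈ Ω such that x is not a scalar multiple of y are disjoint. (Condition (b) says exactly that the balls corresponding to the space-like vectors of Ω form a ball packing, i.e. have pairwise disjoint interiors.) -/

import Mathlib

open scoped BigOperators

namespace BoydMaxwell

variable {V : Type*} [AddCommGroup V] [Module ℝ V]

/-- `(V, B)` is a Lorentz space: `B` is non-degenerate with exactly one negative
eigenvalue, i.e. there is a time-like vector but every subspace on which `B` is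
negative definite has dimension at most `1`. -/
def IsLorentz (B : LinearMap.BilinForm ℝ V) : Prop :=
  B.Nondegenerate ∧ (∃ v : V, B v v < 0) ∧
    ∀ W : Submodule ℝ V, (∀ v ∈ W, v ≠ 0 → B v v < 0) → Module.finrank ℝ W ≤ 1

/-- A root basis in the quadratic space `(V, B)`. -/
structure IsRootBasis (B : LinearMap.BilinForm ℝ V) (Δ : Finset V) : Prop where
  unit : ∀ α ∈ Δ, B α α = 1
  offdiag : ∀ α ∈ Δ, ∀ β ∈ Δ, α ≠ β →
    B α β ≤ -1 ∨ ∃ k : ℕ, 2 ≤ k ∧ B α β = -Real.cos (Real.pi / k)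
  posIndep : ∀ c : V → ℝ, (∀ α ∈ Δ, 0 ≤ c α) →
    (∑ α ∈ Δ, c α • α) = 0 → ∀ α ∈ Δ, c α = 0
  spans : Submodule.span ℝ (Δ : Set V) = ⊤

/-- The reflection `s_α : x ↦ x - 2 B(α,x) α`. -/
def reflection (B : LinearMap.BilinForm ℝ V) (α : V) : V →ₗ[ℝ] V :=
  LinearMap.id - (B α).smulRight ((2 : ℝ) • α)

/-- The Weyl group `W`: the subgroup of linear automorphisms generated by the
reflections in the simple roots. -/
def weylGroup (B : LinearMap.BilinForm ℝ V) (Δ : Finset V) : Subgroup (V ≃ₗ[ℝ] V) :=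
  Subgroup.closure { g : V ≃ₗ[ℝ] V | ∃ α ∈ Δ, (g : V →ₗ[ℝ] V) = reflection B α }

/-- The set of roots `Φ = W(Δ)`. -/
def roots (B : LinearMap.BilinForm ℝ V) (Δ : Finset V) : Set V :=
  { x | ∃ w ∈ weylGroup B Δ, ∃ α ∈ Δ, x = w α }

/-- The polyhedral cone of non-negative linear combinations of a finite set. -/
def cone (Δ : Finset V) : Set V :=
  { x | ∃ c : V → ℝ, (∀ α ∈ Δ, 0 ≤ c α) ∧ x = ∑ α ∈ Δ, c α • α }

/-- `F` is a face of the convex set `C`. -/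
def IsFace (C F : Set V) : Prop :=
  F ⊆ C ∧ Convex ℝ F ∧ ∀ x ∈ C, ∀ y ∈ C, ∀ t : ℝ, 0 < t → t < 1 →
    t • x + (1 - t) • y ∈ F → x ∈ F ∧ y ∈ F

/-- `I ⊆ Δ` is an `l`-facial subset: `Cone(I)` is a face of `Cone(Δ)` and
`Span(I)` has codimension `l` in `V`. -/
def IsFacial (Δ I : Finset V) (l : ℕ) : Prop :=
  I ⊆ Δ ∧ IsFace (cone Δ) (cone I) ∧
    Module.finrank ℝ (Submodule.span ℝ (I : Set V)) + l = Module.finrank ℝ V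

/-- `B` is positive semidefinite on the span of every `l`-facial subset. -/
def LevelLE (B : LinearMap.BilinForm ℝ V) (Δ : Finset V) (l : ℕ) : Prop :=
  ∀ I : Finset V, IsFacial Δ I l → ∀ x ∈ Submodule.span ℝ (I : Set V), 0 ≤ B x x

/-- The root system generated by `Δ` has level exactly `l`: `l` is the smallest
integer such that `B` is positive semidefinite on the span of every `l`-facial
subset of `Δ`. -/
def HasLevel (B : LinearMap.BilinForm ℝ V) (Δ : Finset V) (l : ℕ) : Prop :=
  LevelLE B Δ l ∧ ∀ m : ℕ, m < l → ¬ LevelLE B Δ m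

/-- `ω` is the weight associated to the `1`-facial subset `I`. -/
def IsWeight (B : LinearMap.BilinForm ℝ V) (Δ I : Finset V) (ω : V) : Prop :=
  IsFacial Δ I 1 ∧ (∀ α ∈ I, B α ω = 0) ∧
    (∀ α ∈ Δ, α ∉ I → 0 < B α ω) ∧
    (∀ α ∈ Δ, α ∉ I → 1 ≤ B α ω) ∧ (∃ α ∈ Δ, α ∉ I ∧ B α ω = 1)

/-- The set `Δ*` of weights. -/
def weights (B : LinearMap.BilinForm ℝ V) (Δ : Finset V) : Set V :=
  { ω | ∃ I : Finset V, IsWeight B Δ I ω }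

/-- The orbit `Ω = W(Δ*)`. -/
def Omega (B : LinearMap.BilinForm ℝ V) (Δ : Finset V) : Set V :=
  { x | ∃ w ∈ weylGroup B Δ, ∃ ω ∈ weights B Δ, x = w ω }

/-- Two vectors are disjoint: `B(x,y) ≤ 0` and `B` is not positive definite on
`Span{x,y}`. -/
def DisjointVec (B : LinearMap.BilinForm ℝ V) (x y : V) : Prop :=
  B x y ≤ 0 ∧ ¬ ∀ z ∈ Submodule.span ℝ ({x, y} : Set V), z ≠ 0 → 0 < B z z

/-- The fundamental chamber `C* = {x | B(x, α) ≥ 0 for all α ∈ Δ}`. -/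
def chamber (B : LinearMap.BilinForm ℝ V) (Δ : Finset V) : Set V :=
  { x | ∀ α ∈ Δ, 0 ≤ B x α }

/-- The Tits cone `T = ⋃_{w ∈ W} w(C*)`. -/
def titsCone (B : LinearMap.BilinForm ℝ V) (Δ : Finset V) : Set V :=
  { x | ∃ w ∈ weylGroup B Δ, ∃ y ∈ chamber B Δ, x = w y }

/-- The convex cone generated by an arbitrary set. -/
def coneOf (X : Set V) : Set V :=
  { x | ∃ (s : Finset V) (c : V → ℝ), (↑s ⊆ X) ∧ (∀ v ∈ s, 0 ≤ c v) ∧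
      x = ∑ v ∈ s, c v • v }

/-! A time-like vector in the span of a facet is orthogonal to the weight of that facet, so in
Lorentz space the facets violating level `1` are exactly those whose weight is space-like. A ridge
whose span contains a time-like vector lies on two facets; their weights then span a positive
definite plane and are not disjoint. This gives the level from the packing.

Conversely, assume level at most `2` and let `ω` be a space-like weight of the facet `I`. Every
`y` that is nonnegative on `I` projects along `ω` to a vector that is not space-like, since
otherwise a ridge inside `I` would carry a time-like vector; that is, `B ω ω * B y y ≤ B ω y ^ 2`.
Two different space-like weights satisfy in addition `B ω η ≤ 0`: their mutual projections are not
space-like and lie in the same half of the light cone, so that their product, a positive multiple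
of `B ω η * (B ω η ^ 2 - B ω ω * B η η)`, could otherwise not be negative. Elements of the Weyl
group move a weight `η` by subtracting elements of the positive cone, which only decreases
`B ω η`; this rests on the positivity of roots, which reduces to the dihedral case, where the
coefficients are values of Chebyshev polynomials. When `η = ω`, the first simple reflection moving
`ω` already brings the product down to `B ω ω - 2 * B ω α ^ 2 ≤ -B ω ω`, by the same inequality
applied to `y = -α`. -/

open CoxeterSystem (alternatingWord)
open Polynomial.Chebyshev (U)

variable {B : LinearMap.BilinForm ℝ V}

/-! ### Words in reflections -/

section Words

lemma reflection_apply (α x : V) : reflection B α x = x - (2 * B α x) • α := by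
  simp [reflection, smul_smul, mul_comm]

lemma reflection_neg (α : V) : reflection B (-α) = reflection B α := by
  ext x
  simp [reflection_apply]

lemma reflection_mul_self {α : V} (hα : B α α = 1) : reflection B α * reflection B α = 1 := by
  ext x
  simp only [Module.End.mul_apply, Module.End.one_apply, reflection_apply, map_sub, map_smul,
    hα]
  module

lemma apply_reflection_reflection (hB : B.IsSymm) {α : V} (hα : B α α = 1) (x y : V) :
    B (reflection B α x) (reflection B α y) = B x y := by
  simp only [reflection_apply, map_sub, map_smul, LinearMap.sub_apply, LinearMap.smul_apply,
    smul_eq_mul, hα, hB.eq x α]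
  ring

variable (B) in
/-- The product of the reflections in the vectors of a list. The list stands for a word in the
generators of the Weyl group. -/
def word (l : List V) : Module.End ℝ V := (l.map (reflection B)).prod

@[simp]
lemma word_nil : word B [] = 1 := rfl

lemma word_cons (α : V) (l : List V) : word B (α :: l) = reflection B α * word B l := by
  simp [word]

@[simp]
lemma word_singleton (α : V) : word B [α] = reflection B α := by
  simp [word]

lemma word_append (l l' : List V) : word B (l ++ l') = word B l * word B l' := by
  simp [word]

lemma word_append_cons_cons {α : V} (hα : B α α = 1) (l l' : List V) :
    word B (l ++ α :: α :: l') = word B (l ++ l') := by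
  rw [word_append, word_cons, word_cons, ← mul_assoc (reflection B α), reflection_mul_self hα,
    one_mul, word_append]

lemma apply_word_word (hB : B.IsSymm) {l : List V} (hl : ∀ α ∈ l, B α α = 1) (x y : V) :
    B (word B l x) (word B l y) = B x y := by
  induction l with
  | nil => rfl
  | cons α l ih =>
    rw [List.forall_mem_cons] at hl
    simp only [word_cons, Module.End.mul_apply, apply_reflection_reflection hB hl.1, ih hl.2]

lemma word_mul_reflection (hB : B.IsSymm) {l : List V} (hl : ∀ α ∈ l, B α α = 1) (β : V) :
    word B l * reflection B β = reflection B (word B l β) * word B l := by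
  ext x
  simp only [Module.End.mul_apply, reflection_apply, map_sub, map_smul, apply_word_word hB hl]

lemma exists_word_eq {Δ : Finset V} (hΔ : ∀ α ∈ Δ, B α α = 1) {w : V ≃ₗ[ℝ] V}
    (hw : w ∈ weylGroup B Δ) : ∃ l : List V, (∀ α ∈ l, α ∈ Δ) ∧ word B l = (w : V →ₗ[ℝ] V) := by
  have inv_generator {g : V ≃ₗ[ℝ] V} {α : V} (hα : α ∈ Δ) (hg : (g : V →ₗ[ℝ] V) = reflection B α) :
      g⁻¹ = g := by
    refine inv_eq_of_mul_eq_one_left (LinearEquiv.toLinearMap_injective ?_)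
    exact (congrArg₂ (· * ·) hg hg).trans (reflection_mul_self (hΔ α hα))
  have mul_generator {g y : V ≃ₗ[ℝ] V} (hg : ∃ α ∈ Δ, (g : V →ₗ[ℝ] V) = reflection B α)
      (hy : ∃ l : List V, (∀ α ∈ l, α ∈ Δ) ∧ word B l = (y : V →ₗ[ℝ] V)) :
      ∃ l : List V, (∀ α ∈ l, α ∈ Δ) ∧ word B l = ((g * y : V ≃ₗ[ℝ] V) : V →ₗ[ℝ] V) := by
    obtain ⟨α, hα, hg⟩ := hg
    obtain ⟨l, hl, hly⟩ := hy
    exact ⟨α :: l, List.forall_mem_cons.2 ⟨hα, hl⟩, by rw [word_cons, hly, ← hg]; rfl⟩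
  induction hw using Subgroup.closure_induction_left with
  | one => exact ⟨[], by simp, rfl⟩
  | mul_left g hg y _ hy => exact mul_generator hg hy
  | inv_mul_cancel g hg y _ hy =>
    obtain ⟨α, hα, hgα⟩ := hg
    rw [inv_generator hα hgα]
    exact mul_generator ⟨α, hα, hgα⟩ hy

variable (B) in
/-- The word `l` with letters in `S` has minimal length among the words with letters in `S` that
represent the same transformation. -/
def IsReduced (S : Set V) (l : List V) : Prop :=
  (∀ γ ∈ l, γ ∈ S) ∧
    ∀ l' : List V, (∀ γ ∈ l', γ ∈ S) → word B l' = word B l → l.length ≤ l'.length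

variable (B) in
/-- Right multiplication by the reflection in `α` does not make the word `l` with letters in `S`
shorter. -/
def IsAscent (S : Set V) (l : List V) (α : V) : Prop :=
  (∀ γ ∈ l, γ ∈ S) ∧
    ∀ l' : List V, (∀ γ ∈ l', γ ∈ S) → word B l' = word B (l ++ [α]) → l.length ≤ l'.length

end Words

/-! ### Dihedral positivity -/

section Dihedral

variable {α β : V}

lemma chebyshevU_nonneg_of_one_le {c : ℝ} (hc : 1 ≤ c) (n : ℕ) : 0 ≤ (U ℝ (n - 1)).eval c := by
  suffices h : 0 ≤ (U ℝ (n - 1)).eval c ∧ (U ℝ (n - 1)).eval c ≤ (U ℝ n).eval c from h.1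
  induction n with
  | zero => simp
  | succ n ih =>
    have recurrence := congrArg (Polynomial.eval c) (Polynomial.Chebyshev.U_add_one ℝ n)
    simp only [Polynomial.eval_sub, Polynomial.eval_mul, Polynomial.eval_ofNat,
      Polynomial.eval_X] at recurrence
    push_cast
    rw [add_sub_cancel_right, recurrence]
    exact ⟨ih.1.trans ih.2, by nlinarith⟩

lemma sin_pi_div_natCast_pos {k : ℕ} (hk : 2 ≤ k) : 0 < Real.sin (Real.pi / k) := by
  have hk' : (1 : ℝ) < k := by exact_mod_cast hk
  exact Real.sin_pos_of_pos_of_lt_pi (by positivity) (div_lt_self Real.pi_pos hk')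

lemma chebyshevU_cos_pi_div_nonneg {k n : ℕ} (hk : 2 ≤ k) (hn : n ≤ k) :
    0 ≤ (U ℝ (n - 1)).eval (Real.cos (Real.pi / k)) := by
  have hk' : (k : ℝ) ≠ 0 := by positivity
  refine nonneg_of_mul_nonneg_left ?_ (sin_pi_div_natCast_pos hk)
  rw [Polynomial.Chebyshev.U_real_cos]
  push_cast
  rw [sub_add_cancel]
  refine Real.sin_nonneg_of_nonneg_of_le_pi (by positivity) ?_
  have hnk : (n : ℝ) ≤ k := by exact_mod_cast hn
  calc n * (Real.pi / k) ≤ k * (Real.pi / k) := by gcongr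
    _ = Real.pi := mul_div_cancel₀ _ hk'

lemma chebyshevU_cos_pi_div_sub_one {k : ℕ} (hk : 2 ≤ k) :
    (U ℝ (k - 1)).eval (Real.cos (Real.pi / k)) = 0 := by
  have hk' : (k : ℝ) ≠ 0 := by positivity
  refine (mul_eq_zero_iff_right (sin_pi_div_natCast_pos hk).ne').1 ?_
  rw [Polynomial.Chebyshev.U_real_cos]
  push_cast
  rw [sub_add_cancel, mul_div_cancel₀ _ hk', Real.sin_pi]

lemma chebyshevU_cos_pi_div_self {k : ℕ} (hk : 2 ≤ k) :
    (U ℝ k).eval (Real.cos (Real.pi / k)) = -1 := by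
  have hk' : (k : ℝ) ≠ 0 := by positivity
  refine mul_right_cancel₀ (sin_pi_div_natCast_pos hk).ne' ?_
  rw [Polynomial.Chebyshev.U_real_cos, neg_one_mul]
  push_cast
  rw [add_mul, one_mul, mul_div_cancel₀ _ hk', add_comm, Real.sin_add_pi]

lemma mem_alternatingWord {ι : Type*} {i j a : ι} {m : ℕ} (h : a ∈ alternatingWord i j m) :
    a = i ∨ a = j := by
  induction m generalizing i j with
  | zero => simp [alternatingWord] at h
  | succ m ih =>
    rw [CoxeterSystem.alternatingWord_succ, List.concat_eq_append, List.mem_append,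
      List.mem_singleton] at h
    exact h.elim (fun h => (ih h).symm) Or.inr

lemma word_alternatingWord_apply (hB : B.IsSymm) (hα : B α α = 1) (hβ : B β β = 1) (m : ℕ) :
    word B (alternatingWord α β m) α =
      (U ℝ m).eval (-B α β) • (if Even m then α else β) +
        (U ℝ (m - 1)).eval (-B α β) • (if Even m then β else α) := by
  induction m with
  | zero => simp [alternatingWord]
  | succ m ih =>
    have recurrence := congrArg (Polynomial.eval (-B α β)) (Polynomial.Chebyshev.U_add_one ℝ m)
    simp only [Polynomial.eval_sub, Polynomial.eval_mul, Polynomial.eval_ofNat,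
      Polynomial.eval_X] at recurrence
    rw [CoxeterSystem.alternatingWord_succ', word_cons, Module.End.mul_apply, ih]
    push_cast
    rw [add_sub_cancel_right, recurrence]
    by_cases hm : Even m
    all_goals
      simp only [hm, Nat.even_add_one, if_true, if_false, not_true_eq_false, not_false_eq_true,
        reflection_apply, map_add, map_smul, hα, hβ, hB.eq β α]
      module

lemma word_alternatingWord_append_singleton (hB : B.IsSymm) (hα : B α α = 1) (hβ : B β β = 1)
    {k : ℕ} (hk : 2 ≤ k) (hαβ : B α β = -Real.cos (Real.pi / k)) :
    word B (alternatingWord α β k ++ [α]) = word B (alternatingWord α β (k - 1)) := by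
  obtain ⟨m, rfl⟩ : ∃ m, k = m + 1 := ⟨k - 1, by omega⟩
  have unit_letters : ∀ γ ∈ alternatingWord α β (m + 1), B γ γ = 1 := fun γ hγ => by
    rcases mem_alternatingWord hγ with rfl | rfl <;> assumption
  have image : word B (alternatingWord α β (m + 1)) α = -(if Even m then β else α) := by
    rw [word_alternatingWord_apply hB hα hβ, hαβ, neg_neg, chebyshevU_cos_pi_div_sub_one hk,
      chebyshevU_cos_pi_div_self hk, zero_smul, add_zero, neg_one_smul]
    simp only [Nat.even_add_one, ite_not]
  have unit_first : B (if Even m then β else α) (if Even m then β else α) = 1 := by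
    split_ifs <;> assumption
  rw [word_append, word_singleton, word_mul_reflection hB unit_letters, image, reflection_neg,
    CoxeterSystem.alternatingWord_succ', word_cons, ← mul_assoc, reflection_mul_self unit_first,
    one_mul, Nat.add_sub_cancel]

lemma alternatingWord_suffix {ι : Type*} (i j : ι) {k m : ℕ} (h : k ≤ m) :
    alternatingWord i j k <:+ alternatingWord i j m := by
  induction m, h using Nat.le_induction with
  | base => exact List.suffix_rfl
  | succ m _ ih =>
    rw [CoxeterSystem.alternatingWord_succ']
    exact ih.trans (List.suffix_cons _ _)

lemma eq_alternatingWord_of_isChain {ι : Type*} {i j : ι} {l : List ι}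
    (hl : ∀ a ∈ l, a = i ∨ a = j) (h : List.IsChain (· ≠ ·) (l ++ [i])) :
    l = alternatingWord i j l.length := by
  induction l using List.reverseRecOn generalizing i j with
  | nil => rfl
  | append_singleton l a ih =>
    rw [List.append_assoc, List.singleton_append, List.isChain_append_cons_cons] at h
    obtain rfl : a = j := (hl a (by simp)).resolve_left h.2.1
    rw [List.length_append, List.length_singleton, CoxeterSystem.alternatingWord_succ,
      List.concat_eq_append, ← ih (fun b hb => (hl b (by simp [hb])).symm) h.1]

lemma IsAscent.isChain {S : Set V} {l : List V} (hS : ∀ γ ∈ S, B γ γ = 1) (hα : α ∈ S)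
    (h : IsAscent B S l α) : List.IsChain (· ≠ ·) (l ++ [α]) := by
  rw [List.isChain_iff_forall_rel_of_append_cons_cons]
  rintro a _ l₁ l₂ hl rfl
  have letters : ∀ γ ∈ l₁ ++ a :: a :: l₂, γ ∈ S := by
    rw [← hl]
    simpa [or_imp, forall_and, hα] using h.1
  have shorter := h.2 (l₁ ++ l₂) (fun γ hγ => letters γ (by grind))
    (by rw [hl, word_append_cons_cons (hS a (letters a (by simp)))])
  have := congrArg List.length hl
  simp only [List.length_append, List.length_cons, List.length_nil] at this shorter
  omega

lemma length_lt_of_isAscent_alternatingWord (hB : B.IsSymm) (hα : B α α = 1) (hβ : B β β = 1)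
    {k m : ℕ} (hk : 2 ≤ k) (hαβ : B α β = -Real.cos (Real.pi / k))
    (h : IsAscent B {α, β} (alternatingWord α β m) α) : m < k := by
  by_contra! hkm
  obtain ⟨l, hl⟩ := alternatingWord_suffix α β hkm
  have shorter := h.2 (l ++ alternatingWord α β (k - 1))
    (fun γ hγ => (List.mem_append.1 hγ).elim (fun hγ => h.1 γ (by simp [← hl, hγ]))
      mem_alternatingWord)
    (by rw [← hl, List.append_assoc, word_append, word_append,
      word_alternatingWord_append_singleton hB hα hβ hk hαβ])
  have := congrArg List.length hl
  simp only [List.length_append, CoxeterSystem.length_alternatingWord] at this shorter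
  omega

lemma IsAscent.exists_word_apply_eq_add (hB : B.IsSymm) (hα : B α α = 1) (hβ : B β β = 1)
    (hαβ : B α β ≤ -1 ∨ ∃ k : ℕ, 2 ≤ k ∧ B α β = -Real.cos (Real.pi / k)) {l : List V}
    (h : IsAscent B {α, β} l α) :
    ∃ p q : ℝ, 0 ≤ p ∧ 0 ≤ q ∧ word B l α = p • α + q • β := by
  have hl : l = alternatingWord α β l.length :=
    eq_alternatingWord_of_isChain h.1 (h.isChain (by simp [hα, hβ]) (by simp))
  generalize l.length = m at hl
  subst hl
  obtain ⟨hp, hq⟩ : 0 ≤ (U ℝ m).eval (-B α β) ∧ 0 ≤ (U ℝ (m - 1)).eval (-B α β) := by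
    rcases hαβ with hαβ | ⟨k, hk, hαβ⟩
    · exact ⟨by simpa using chebyshevU_nonneg_of_one_le (le_neg_of_le_neg hαβ) (m + 1),
        chebyshevU_nonneg_of_one_le (le_neg_of_le_neg hαβ) m⟩
    · have hmk := length_lt_of_isAscent_alternatingWord hB hα hβ hk hαβ h
      rw [hαβ, neg_neg]
      exact ⟨by simpa using chebyshevU_cos_pi_div_nonneg hk (n := m + 1) hmk,
        chebyshevU_cos_pi_div_nonneg hk hmk.le⟩
  rw [word_alternatingWord_apply hB hα hβ]
  split_ifs
  · exact ⟨_, _, hp, hq, rfl⟩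
  · exact ⟨_, _, hq, hp, add_comm _ _⟩

end Dihedral

/-! ### Polyhedral cones and their faces -/

section Cones

variable {Δ I : Finset V} {x y : V}

lemma coe_hull_eq_cone (Δ : Finset V) : (PointedCone.hull ℝ (Δ : Set V) : Set V) = cone Δ := by
  ext x
  rw [SetLike.mem_coe]
  refine Submodule.mem_span_finset.trans ⟨?_, ?_⟩
  · rintro ⟨c, -, rfl⟩
    exact ⟨fun a => c a, fun a _ => (c a).2, rfl⟩
  · rintro ⟨c, hc, rfl⟩
    refine (Submodule.mem_span_finset (R := {r : ℝ // 0 ≤ r})).1 <|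
      Submodule.sum_mem _ fun a ha => ?_
    exact Submodule.smul_mem _ (⟨c a, hc a ha⟩ : {r : ℝ // 0 ≤ r}) (Submodule.subset_span ha)

lemma subset_cone : (Δ : Set V) ⊆ cone Δ := by
  rw [← coe_hull_eq_cone]
  exact PointedCone.subset_hull

lemma zero_mem_cone : (0 : V) ∈ cone Δ := by
  rw [← coe_hull_eq_cone]
  exact zero_mem _

lemma add_mem_cone (hx : x ∈ cone Δ) (hy : y ∈ cone Δ) : x + y ∈ cone Δ := by
  rw [← coe_hull_eq_cone] at *
  exact add_mem hx hy

lemma smul_mem_cone {r : ℝ} (hr : 0 ≤ r) (hx : x ∈ cone Δ) : r • x ∈ cone Δ := by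
  rw [← coe_hull_eq_cone] at *
  exact PointedCone.smul_mem _ hr hx

lemma sum_mem_cone {ι : Type*} {s : Finset ι} {f : ι → V} (h : ∀ i ∈ s, f i ∈ cone Δ) :
    ∑ i ∈ s, f i ∈ cone Δ := by
  simp only [← coe_hull_eq_cone, SetLike.mem_coe] at *
  exact sum_mem h

lemma cone_mono (h : I ⊆ Δ) : cone I ⊆ cone Δ := by
  simp only [← coe_hull_eq_cone]
  exact Submodule.span_mono (Finset.coe_subset.2 h)

lemma convex_cone (Δ : Finset V) : Convex ℝ (cone Δ) := by
  rw [← coe_hull_eq_cone]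
  exact PointedCone.convex _

lemma cone_subset_span (Δ : Finset V) : cone Δ ⊆ Submodule.span ℝ (Δ : Set V) := by
  rintro _ ⟨c, -, rfl⟩
  exact Submodule.sum_smul_mem _ _ fun a ha => Submodule.subset_span ha

lemma nonneg_of_mem_cone {f : V →ₗ[ℝ] ℝ} (hf : ∀ a ∈ Δ, 0 ≤ f a) (hx : x ∈ cone Δ) :
    0 ≤ f x := by
  obtain ⟨c, hc, rfl⟩ := hx
  rw [map_sum]
  exact Finset.sum_nonneg fun a ha => by
    simpa using mul_nonneg (hc a ha) (hf a ha)

lemma IsFace.mem_of_add_mem (h : IsFace (cone Δ) (cone I)) (hx : x ∈ cone Δ) (hy : y ∈ cone Δ)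
    (hxy : x + y ∈ cone I) : x ∈ cone I := by
  have hmid : (1 / 2 : ℝ) • (2 : ℝ) • x + (1 - 1 / 2 : ℝ) • (2 : ℝ) • y = x + y := by module
  have h2x := (h.2.2 ((2 : ℝ) • x) (smul_mem_cone zero_le_two hx) ((2 : ℝ) • y)
    (smul_mem_cone zero_le_two hy) (1 / 2) (by norm_num) (by norm_num) (by rwa [hmid])).1
  simpa using smul_mem_cone (r := 2⁻¹) (by norm_num) h2x

lemma IsFace.trans {C F G : Set V} (hF : IsFace C F) (hG : IsFace F G) : IsFace C G := by
  refine ⟨hG.1.trans hF.1, hG.2.1, fun x hx y hy t ht ht' hxy => ?_⟩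
  obtain ⟨hxF, hyF⟩ := hF.2.2 x hx y hy t ht ht' (hG.1 hxy)
  exact hG.2.2 x hxF y hyF t ht ht' hxy

lemma IsFace.mem_of_mem_span (h : IsFace (cone Δ) (cone I)) (hI : I ⊆ Δ) (hx : x ∈ cone Δ)
    (hxI : x ∈ Submodule.span ℝ (I : Set V)) : x ∈ cone I := by
  obtain ⟨c, -, rfl⟩ := Submodule.mem_span_finset.1 hxI
  refine h.mem_of_add_mem hx (y := ∑ a ∈ I, |c a| • a) ?_ ?_
  · exact cone_mono hI ⟨fun a => |c a|, fun a _ => abs_nonneg _, rfl⟩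
  · refine ⟨fun a => c a + |c a|, fun a _ => by linarith [neg_abs_le (c a)], ?_⟩
    simp only [add_smul, Finset.sum_add_distrib]

lemma mem_cone_filter_of_apply_eq_zero {f : V →ₗ[ℝ] ℝ} (hf : ∀ a ∈ Δ, 0 ≤ f a) (hx : x ∈ cone Δ)
    (hfx : f x = 0) : x ∈ cone {a ∈ Δ | f a = 0} := by
  obtain ⟨c, hc, rfl⟩ := hx
  simp only [map_sum, map_smul, smul_eq_mul] at hfx
  have terms := (Finset.sum_eq_zero_iff_of_nonneg fun a ha => mul_nonneg (hc a ha) (hf a ha)).1 hfx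
  refine sum_mem_cone fun a ha => ?_
  rcases mul_eq_zero.1 (terms a ha) with hca | hfa
  · rw [hca, zero_smul]
    exact zero_mem_cone
  · exact smul_mem_cone (hc a ha) (subset_cone (by simp [ha, hfa]))

lemma span_filter_le_ker (I : Finset V) (f : V →ₗ[ℝ] ℝ) :
    Submodule.span ℝ (↑{a ∈ I | f a = 0} : Set V) ≤ LinearMap.ker f :=
  Submodule.span_le.2 fun _ ha => (Finset.mem_filter.1 ha).2

lemma span_filter_le_span (I : Finset V) (f : V →ₗ[ℝ] ℝ) :
    Submodule.span ℝ (↑{a ∈ I | f a = 0} : Set V) ≤ Submodule.span ℝ (I : Set V) :=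
  Submodule.span_mono (Finset.coe_subset.2 (Finset.filter_subset _ _))

lemma exists_add_smul_nonneg {f g : V →ₗ[ℝ] ℝ} (hf : ∀ a ∈ Δ, 0 ≤ f a) {b : V} (hb : b ∈ Δ)
    (hgb : g b < 0) :
    ∃ r : ℝ, (∀ a ∈ Δ, 0 ≤ (f + r • g) a) ∧ ∃ m ∈ Δ, g m < 0 ∧ (f + r • g) m = 0 := by
  obtain ⟨m, hm, hmin⟩ := Finset.exists_min_image {a ∈ Δ | g a < 0} (fun a => f a / -g a)
    ⟨b, by simp [hb, hgb]⟩
  obtain ⟨hmΔ, hgm⟩ := Finset.mem_filter.1 hm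
  have hr : 0 ≤ f m / -g m := div_nonneg (hf m hmΔ) (neg_nonneg.2 hgm.le)
  refine ⟨f m / -g m, fun a ha => ?_, m, hmΔ, hgm, ?_⟩ <;>
    rw [LinearMap.add_apply, LinearMap.smul_apply, smul_eq_mul]
  · rcases lt_or_ge (g a) 0 with hga | hga
    · have := hmin a (by simp [ha, hga])
      rw [le_div_iff₀ (neg_pos.2 hga)] at this
      linarith
    · exact add_nonneg (hf a ha) (mul_nonneg hr hga)
  · rw [div_neg, neg_mul, div_mul_cancel₀ _ hgm.ne, add_neg_cancel]

lemma isFace_cone_filter {f : V →ₗ[ℝ] ℝ} (hf : ∀ a ∈ Δ, 0 ≤ f a) :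
    IsFace (cone Δ) (cone {a ∈ Δ | f a = 0}) := by
  refine ⟨cone_mono (Finset.filter_subset _ _), convex_cone _, fun x hx y hy t ht ht' hxy => ?_⟩
  have hsum : f (t • x + (1 - t) • y) = 0 := span_filter_le_ker Δ f (cone_subset_span _ hxy)
  simp only [map_add, map_smul, smul_eq_mul] at hsum
  have ht1 : 0 < 1 - t := sub_pos.2 ht'
  have hfx := nonneg_of_mem_cone hf hx
  have hfy := nonneg_of_mem_cone hf hy
  rw [add_eq_zero_iff_of_nonneg (by positivity) (by positivity)] at hsum
  exact ⟨mem_cone_filter_of_apply_eq_zero hf hx (by simpa [ht.ne'] using hsum.1),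
    mem_cone_filter_of_apply_eq_zero hf hy (by simpa [ht1.ne'] using hsum.2)⟩

end Cones

section RootBasis

variable {Δ I : Finset V}

lemma IsRootBasis.apply_nonpos (hΔ : IsRootBasis B Δ) {a b : V} (ha : a ∈ Δ) (hb : b ∈ Δ)
    (hab : a ≠ b) : B a b ≤ 0 := by
  rcases hΔ.offdiag a ha b hb hab with h | ⟨k, hk, h⟩
  · linarith
  · have hk' : (2 : ℝ) ≤ k := by exact_mod_cast hk
    rw [h, neg_nonpos]
    refine Real.cos_nonneg_of_neg_pi_div_two_le_of_le ?_ ?_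
    · exact (neg_nonpos.2 (by positivity)).trans (by positivity)
    · exact div_le_div_of_nonneg_left Real.pi_pos.le two_pos hk'

lemma IsRootBasis.sum_apply_sum_nonpos (hΔ : IsRootBasis B Δ) (hI : I ⊆ Δ) {c d : V → ℝ}
    (hc : ∀ a ∈ I, 0 ≤ c a) (hd : ∀ a ∈ I, 0 ≤ d a) (hcd : ∀ a ∈ I, c a = 0 ∨ d a = 0) :
    B (∑ a ∈ I, c a • a) (∑ a ∈ I, d a • a) ≤ 0 := by
  simp only [map_sum, LinearMap.sum_apply, map_smul, LinearMap.smul_apply, smul_eq_mul,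
    Finset.mul_sum]
  refine Finset.sum_nonpos fun b hb => Finset.sum_nonpos fun a ha => ?_
  obtain rfl | hab := eq_or_ne a b
  · rcases hcd a ha with h | h <;> simp [h]
  · exact mul_nonpos_of_nonneg_of_nonpos (hd b hb)
      (mul_nonpos_of_nonneg_of_nonpos (hc a ha) (hΔ.apply_nonpos (hI ha) (hI hb) hab))

lemma IsRootBasis.mem_of_mem_cone (hΔ : IsRootBasis B Δ) (hI : I ⊆ Δ) {a : V} (ha : a ∈ Δ)
    (haI : a ∈ cone I) : a ∈ I := by
  by_contra hn
  have h : 0 ≤ (-B a) a := nonneg_of_mem_cone (fun b hb => neg_nonneg.2 <|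
    hΔ.apply_nonpos ha (hI hb) (ne_of_mem_of_not_mem hb hn).symm) haI
  rw [LinearMap.neg_apply, hΔ.unit a ha] at h
  linarith

lemma IsRootBasis.notMem_span (hΔ : IsRootBasis B Δ) (hI : I ⊆ Δ)
    (h : IsFace (cone Δ) (cone I)) {a : V} (ha : a ∈ Δ) (haI : a ∉ I) :
    a ∉ Submodule.span ℝ (I : Set V) :=
  fun hspan => haI (hΔ.mem_of_mem_cone hI ha (h.mem_of_mem_span hI (subset_cone ha) hspan))

end RootBasis

/-! ### Positivity of roots -/

section Positivity

variable {S T : Set V} {Δ : Finset V} {l l₁ l₂ : List V} {α ω : V}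

lemma IsReduced.of_append_left (h : IsReduced B S (l₁ ++ l₂)) : IsReduced B S l₁ := by
  obtain ⟨hl, hmin⟩ := h
  rw [List.forall_mem_append] at hl
  refine ⟨hl.1, fun l hlS hw => ?_⟩
  have := hmin (l ++ l₂) (List.forall_mem_append.2 ⟨hlS, hl.2⟩) (by simp only [word_append, hw])
  simpa using this

lemma IsReduced.of_append_right (h : IsReduced B S (l₁ ++ l₂)) : IsReduced B S l₂ := by
  obtain ⟨hl, hmin⟩ := h
  rw [List.forall_mem_append] at hl
  refine ⟨hl.2, fun l hlS hw => ?_⟩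
  have := hmin (l₁ ++ l) (List.forall_mem_append.2 ⟨hl.1, hlS⟩) (by simp only [word_append, hw])
  simpa using this

lemma IsReduced.isAscent (h : IsReduced B S (l ++ [α])) : IsAscent B S l α := by
  refine ⟨h.of_append_left.1, fun l' hl' hw => ?_⟩
  have := h.2 l' hl' hw
  simp only [List.length_append, List.length_singleton] at this
  omega

lemma IsAscent.of_word_eq (h : IsAscent B S l₁ α) (hl : IsReduced B S l₂)
    (hw : word B l₂ = word B l₁) : IsAscent B S l₂ α := by
  refine ⟨hl.1, fun l' hl' hl'w => (hl.2 l₁ h.1 hw.symm).trans (h.2 l' hl' ?_)⟩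
  rw [hl'w, word_append, hw, word_append]

lemma IsAscent.of_append_right (h : IsAscent B S (l₁ ++ l₂) α) (hTS : T ⊆ S)
    (hl₂ : ∀ γ ∈ l₂, γ ∈ T) : IsAscent B T l₂ α := by
  refine ⟨hl₂, fun l' hl' hw => ?_⟩
  have hl₁ := (List.forall_mem_append.1 h.1).1
  have := h.2 (l₁ ++ l') (List.forall_mem_append.2 ⟨hl₁, fun γ hγ => hTS (hl' γ hγ)⟩)
    (by rw [List.append_assoc, word_append, hw, word_append l₁])
  simpa using this

variable (B) in
lemma exists_isReduced (hl : ∀ γ ∈ l, γ ∈ S) : ∃ l', word B l' = word B l ∧ IsReduced B S l' := by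
  obtain ⟨l', ⟨hl', hw⟩, hmin⟩ := exists_minimalFor_of_wellFoundedLT
    (fun l' => (∀ γ ∈ l', γ ∈ S) ∧ word B l' = word B l) List.length ⟨l, hl, rfl⟩
  refine ⟨l', hw, hl', fun m hm hmw => ?_⟩
  exact (le_total _ _).elim id (hmin ⟨hm, hmw.trans hw⟩)

lemma IsReduced.exists_parabolic_factorization (hS : ∀ γ ∈ S, B γ γ = 1) (hTS : T ⊆ S)
    (hl : IsReduced B S l) :
    ∃ v d : List V, (∀ γ ∈ d, γ ∈ T) ∧ word B (v ++ d) = word B l ∧ IsReduced B S (v ++ d) ∧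
      ∀ δ ∈ T, IsAscent B S v δ := by
  obtain ⟨⟨v, d⟩, ⟨hd, hw, hred⟩, hmin⟩ := exists_minimalFor_of_wellFoundedLT
    (fun vd : List V × List V => (∀ γ ∈ vd.2, γ ∈ T) ∧ word B (vd.1 ++ vd.2) = word B l ∧
      IsReduced B S (vd.1 ++ vd.2)) (fun vd => vd.1.length)
    ⟨(l, []), by simp, by simp, by simpa using hl⟩
  refine ⟨v, d, hd, hw, hred, fun δ hδ => ⟨hred.of_append_left.1, fun v' hv' hv'w => ?_⟩⟩
  by_contra! hlt
  have letters : ∀ γ ∈ v' ++ δ :: d, γ ∈ S := by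
    simp only [List.forall_mem_append, List.forall_mem_cons]
    exact ⟨hv', hTS hδ, fun γ hγ => hTS (hd γ hγ)⟩
  have same_word : word B (v' ++ δ :: d) = word B (v ++ d) := by
    rw [word_append, hv'w, ← word_append, List.append_assoc, List.singleton_append,
      word_append_cons_cons (hS δ (hTS hδ))]
  have reduced : IsReduced B S (v' ++ δ :: d) := by
    refine ⟨letters, fun m hm hmw => le_trans ?_ (hred.2 m hm (hmw.trans same_word))⟩
    simp only [List.length_append, List.length_cons]
    omega
  exact hlt.not_ge (hmin (j := (v', δ :: d))
    ⟨List.forall_mem_cons.2 ⟨hδ, hd⟩, same_word.trans hw, reduced⟩ hlt.le)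

/-- Split off from `l` a maximal right factor in the dihedral group generated by the reflections
in `α` and in the last letter of `l`. -/
theorem IsRootBasis.word_apply_mem_cone (hB : B.IsSymm) (hΔ : IsRootBasis B Δ) (hα : α ∈ Δ)
    (hred : IsReduced B Δ l) (hasc : IsAscent B Δ l α) : word B l α ∈ cone Δ := by
  induction hn : l.length using Nat.strong_induction_on generalizing l α with
  | _ n ih =>
  obtain rfl | ⟨l₀, β, rfl⟩ := List.eq_nil_or_concat' l
  · exact subset_cone hα
  have hβ : β ∈ Δ := hred.1 β (by simp)
  have hβα : β ≠ α := by
    have chain := hasc.isChain hΔ.unit hα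
    rw [List.append_assoc, List.singleton_append, List.isChain_append_cons_cons] at chain
    exact chain.2.1
  have hTΔ : ({α, β} : Set V) ⊆ Δ := Set.pair_subset hα hβ
  obtain ⟨v, d, hd, hw, hvd, hv⟩ := hred.exists_parabolic_factorization hΔ.unit hTΔ
  have v_lt : v.length < n := by
    have hlen := hvd.2 _ hred.1 hw.symm
    cases d with
    | nil =>
      refine ((hv β (by simp)).2 l₀ hred.of_append_left.1 ?_).trans_lt (by simp [← hn])
      rw [List.append_nil] at hw
      rw [word_append, hw, ← word_append, List.append_assoc, List.singleton_append,
        word_append_cons_cons (hΔ.unit β hβ), List.append_nil]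
    | cons γ d =>
      simp only [List.length_append, List.length_cons] at hlen hn
      omega
  have v_apply_mem {δ : V} (hδ : δ ∈ ({α, β} : Set V)) : word B v δ ∈ cone Δ :=
    ih _ v_lt (hTΔ hδ) hvd.of_append_left (hv δ hδ) rfl
  have d_ascent : IsAscent B {α, β} d α := (hasc.of_word_eq hvd hw).of_append_right hTΔ hd
  obtain ⟨p, q, hp, hq, hpq⟩ := d_ascent.exists_word_apply_eq_add hB (hΔ.unit α hα)
    (hΔ.unit β hβ) (hΔ.offdiag α hα β hβ hβα.symm)
  rw [← hw, word_append, Module.End.mul_apply, hpq, map_add, map_smul, map_smul]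
  exact add_mem_cone (smul_mem_cone hp (v_apply_mem (by simp)))
    (smul_mem_cone hq (v_apply_mem (by simp)))

lemma IsRootBasis.word_apply_sub_word_append_apply_mem_cone (hB : B.IsSymm)
    (hΔ : IsRootBasis B Δ) (hω : ω ∈ chamber B Δ) (h : IsReduced B Δ (l₁ ++ l₂)) :
    word B l₁ ω - word B (l₁ ++ l₂) ω ∈ cone Δ := by
  induction l₂ using List.reverseRecOn with
  | nil => simpa using zero_mem_cone
  | append_singleton l₂ α ih =>
    rw [← List.append_assoc] at h ⊢
    have hα : α ∈ Δ := h.1 α (by simp)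
    have root_mem := hΔ.word_apply_mem_cone hB hα h.of_append_left h.isAscent
    have split : word B l₁ ω - word B (l₁ ++ l₂ ++ [α]) ω =
        (word B l₁ ω - word B (l₁ ++ l₂) ω) + (2 * B ω α) • word B (l₁ ++ l₂) α := by
      rw [word_append (l₁ ++ l₂), word_singleton, Module.End.mul_apply, reflection_apply, map_sub,
        map_smul, hB.eq α ω]
      abel
    rw [split]
    exact add_mem_cone (ih h.of_append_left)
      (smul_mem_cone (mul_nonneg zero_le_two (hω α hα)) root_mem)

lemma IsRootBasis.word_apply_eq_or_apply_word_le (hB : B.IsSymm) (hΔ : IsRootBasis B Δ)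
    (hω : ω ∈ chamber B Δ) (hnorm : ∀ α ∈ Δ, B ω α ≠ 0 → B ω ω ≤ B ω α ^ 2)
    (hl : IsReduced B Δ l) : word B l ω = ω ∨ B ω (word B l ω) ≤ -B ω ω := by
  induction l with
  | nil => exact Or.inl rfl
  | cons α l ih =>
    have hα : α ∈ Δ := hl.1 α (by simp)
    by_cases hωα : B ω α = 0
    · have fixed : reflection B α ω = ω := by simp [reflection_apply, hB.eq α ω, hωα]
      rw [word_cons, Module.End.mul_apply]
      refine (ih (hl.of_append_right (l₁ := [α]))).imp (fun h => by rw [h, fixed]) fun h => ?_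
      calc B ω (reflection B α (word B l ω))
          = B (reflection B α ω) (reflection B α (word B l ω)) := by rw [fixed]
        _ = B ω (word B l ω) := apply_reflection_reflection hB (hΔ.unit α hα) _ _
        _ ≤ -B ω ω := h
    · right
      have := nonneg_of_mem_cone hω
        (hΔ.word_apply_sub_word_append_apply_mem_cone hB hω (l₁ := [α]) (l₂ := l) hl)
      simp only [List.singleton_append, word_singleton, reflection_apply, map_sub, map_smul,
        smul_eq_mul, hB.eq α ω] at this
      linarith [hnorm α hα hωα]

end Positivity

/-! ### Lorentz geometry -/

section Rejection

variable {x y z : V}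

variable (B) in
/-- The component of `y` orthogonal to `x`, scaled by `B x x` in order to avoid the division. -/
def rejection (x y : V) : V := B x x • y - B x y • x

@[simp]
lemma apply_rejection (x y z : V) : B z (rejection B x y) = B x x * B z y - B x y * B z x := by
  simp [rejection]

lemma rejection_apply (x y z : V) : B (rejection B x y) z = B x x * B y z - B x y * B x z := by
  simp [rejection]

lemma apply_rejection_self (x y : V) : B x (rejection B x y) = 0 := by
  simp [mul_comm]

lemma rejection_apply_rejection (hB : B.IsSymm) (x y : V) :
    B (rejection B x y) (rejection B x y) = B x x * (B x x * B y y - B x y ^ 2) := by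
  simp only [apply_rejection, rejection_apply, hB.eq y x]
  ring

lemma rejection_apply_rejection_nonpos (hB : B.IsSymm) (hx : 0 ≤ B x x)
    (hsq : B x x * B y y ≤ B x y ^ 2) : B (rejection B x y) (rejection B x y) ≤ 0 := by
  rw [rejection_apply_rejection hB]
  exact mul_nonpos_of_nonneg_of_nonpos hx (sub_nonpos.2 hsq)

lemma rejection_apply_rejection_swap (hB : B.IsSymm) (x y : V) :
    B (rejection B x y) (rejection B y x) = B x y * (B x y ^ 2 - B x x * B y y) := by
  simp only [apply_rejection, rejection_apply, hB.eq y x]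
  ring

lemma exists_eq_smul_of_rejection_eq_smul (hB : B.IsSymm) {r : ℝ} (hx : 0 < B x x)
    (hxy : 0 < B x y) (hr : 0 < r) (h : rejection B y x = r • rejection B x y) :
    ∃ c : ℝ, y = c • x := by
  have hpos : 0 < B x y + r * B x x := by positivity
  have heq : (B x y + r * B x x) • y = (B y y + r * B x y) • x := by
    rw [rejection, rejection, hB.eq y x, ← sub_eq_zero] at h
    rw [← sub_eq_zero, ← neg_eq_zero, ← h]
    module
  exact ⟨_, (eq_inv_smul_iff₀ hpos.ne').2 heq |>.trans (smul_smul _ _ _)⟩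

lemma rejection_ne_zero (hx : B x x ≠ 0) (hxy : ∀ c : ℝ, y ≠ c • x) : rejection B x y ≠ 0 := by
  intro h
  refine hxy ((B x x)⁻¹ * B x y) ?_
  rw [mul_smul, ← sub_eq_zero.1 h, inv_smul_smul₀ hx]

lemma disjointVec_of_mul_le_sq (hB : B.IsSymm) (hx : 0 < B x x) (hxy : B x y ≤ 0)
    (hsq : B x x * B y y ≤ B x y ^ 2) (hne : ∀ c : ℝ, y ≠ c • x) : DisjointVec B x y := by
  refine ⟨hxy, fun hpos => ?_⟩
  have := hpos (rejection B x y) (Submodule.mem_span_pair.2 ⟨-B x y, B x x, by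
    rw [rejection]
    module⟩) (rejection_ne_zero hx.ne' hne)
  exact this.not_ge (rejection_apply_rejection_nonpos hB hx.le hsq)

end Rejection

section Lorentz

variable {t t' u v x z : V}

lemma linearIndependent_pair_of_timelike (hB : B.IsSymm) (hz : B z z < 0) (hx : B x x < 0)
    (hzx : B z x = 0) : LinearIndependent ℝ ![z, x] := by
  rw [LinearIndependent.pair_iff]
  intro r s h
  have hz' := congrArg (B z) h
  have hx' := congrArg (B x) h
  simp only [map_add, map_smul, smul_eq_mul, hB.eq x z, hzx, map_zero, mul_zero, add_zero,
    zero_add, mul_eq_zero, hz.ne, hx.ne, or_false] at hz' hx'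
  exact ⟨hz', hx'⟩

lemma IsLorentz.nonneg_of_orthogonal (hB : B.IsSymm) (hL : IsLorentz B) (hz : B z z < 0)
    (hzx : B z x = 0) : 0 ≤ B x x := by
  by_contra! hx
  have negative : ∀ v ∈ Submodule.span ℝ (Set.range ![z, x]), v ≠ 0 → B v v < 0 := by
    intro v hv hv0
    rw [Matrix.range_cons_cons_empty] at hv
    obtain ⟨a, b, rfl⟩ := Submodule.mem_span_pair.1 hv
    have expand : B (a • z + b • x) (a • z + b • x) = a ^ 2 * B z z + b ^ 2 * B x x := by
      simp only [map_add, map_smul, LinearMap.add_apply, LinearMap.smul_apply, smul_eq_mul,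
        hB.eq x z, hzx]
      ring
    rw [expand]
    rcases eq_or_ne a 0 with rfl | ha
    · have hb : b ≠ 0 := by
        rintro rfl
        simp at hv0
      nlinarith [sq_pos_of_ne_zero hb]
    · nlinarith [sq_pos_of_ne_zero ha, sq_nonneg b]
  have hrank := hL.2.2 _ negative
  rw [finrank_span_eq_card (linearIndependent_pair_of_timelike hB hz hx hzx)] at hrank
  simp at hrank

lemma IsLorentz.pos_of_orthogonal (hB : B.IsSymm) (hL : IsLorentz B) (hz : B z z < 0)
    (hzx : B z x = 0) (hx : x ≠ 0) : 0 < B x x := by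
  refine (hL.nonneg_of_orthogonal hB hz hzx).lt_of_ne fun hxx => hx (hL.1.1 x fun y => ?_)
  have cauchy_schwarz := (B.restrict (LinearMap.ker (B z))).apply_mul_apply_le_of_forall_zero_le
    (fun w => (hL.nonneg_of_orthogonal hB hz w.2 : 0 ≤ B w w)) ⟨x, hzx⟩
    ⟨rejection B z y, apply_rejection_self z y⟩
  simp only [LinearMap.BilinForm.restrict, LinearMap.domRestrict₁₂_apply, ← hxx, zero_mul,
    hB.eq (rejection B z y) x, apply_rejection, hB.eq x z, hzx, mul_zero,
    sub_zero] at cauchy_schwarz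
  have := mul_self_eq_zero.1 (cauchy_schwarz.antisymm (mul_self_nonneg _))
  exact (mul_eq_zero.1 this).resolve_left hz.ne

lemma IsLorentz.apply_ne_zero (hB : B.IsSymm) (hL : IsLorentz B) (ht : B t t < 0) (hx : x ≠ 0)
    (hxx : B x x ≤ 0) : B t x ≠ 0 :=
  fun h => hxx.not_gt (hL.pos_of_orthogonal hB ht h hx)

lemma IsLorentz.apply_neg_or_eq_smul (hB : B.IsSymm) (hL : IsLorentz B) (ht : B t t < 0)
    (hu : B u u ≤ 0) (hv : B v v ≤ 0) (htu : B t u < 0) (htv : B t v < 0) :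
    B u v < 0 ∨ ∃ r : ℝ, 0 < r ∧ v = r • u := by
  set r := B t v / B t u
  have hr : 0 < r := div_pos_of_neg_of_neg htv htu
  refine or_iff_not_imp_right.2 fun hvu => ?_
  have orthogonal : B t (v - r • u) = 0 := by
    rw [map_sub, map_smul, smul_eq_mul, div_mul_cancel₀ _ htu.ne, sub_self]
  have spacelike := hL.pos_of_orthogonal hB ht orthogonal (sub_ne_zero.2 fun h => hvu ⟨r, hr, h⟩)
  simp only [map_sub, map_smul, LinearMap.sub_apply, LinearMap.smul_apply, smul_eq_mul,
    hB.eq v u] at spacelike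
  nlinarith [mul_nonneg (sq_nonneg r) (neg_nonneg.2 hu)]

lemma IsLorentz.apply_neg (hB : B.IsSymm) (hL : IsLorentz B) (ht : B t t < 0) (hu : B u u < 0)
    (hv : B v v ≤ 0) (htu : B t u < 0) (htv : B t v < 0) : B u v < 0 := by
  rcases hL.apply_neg_or_eq_smul hB ht hu.le hv htu htv with h | ⟨r, hr, rfl⟩
  · exact h
  · rw [map_smul]
    exact mul_neg_of_pos_of_neg hr hu

lemma IsLorentz.exists_timelike_orthogonal (hB : B.IsSymm) (hL : IsLorentz B) (hx : 0 < B x x) :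
    ∃ z, B x z = 0 ∧ B z z < 0 := by
  obtain ⟨t, ht⟩ := hL.2.1
  refine ⟨rejection B x t, apply_rejection_self x t, ?_⟩
  rw [rejection_apply_rejection hB]
  have := mul_neg_of_pos_of_neg hx ht
  exact mul_neg_of_pos_of_neg hx (by linarith [sq_nonneg (B x t)])

end Lorentz

section TimelikeCone

variable {Δ I : Finset V} {p n t t' z : V} {a b : ℝ}

lemma timelike_or_timelike_of_sub (hB : B.IsSymm) (hpn : B p n ≤ 0)
    (h : B (p - n) (p - n) < 0) : B p p < 0 ∨ B n n < 0 := by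
  simp only [map_sub, LinearMap.sub_apply, hB.eq n p] at h
  by_contra! hcon
  linarith

lemma sum_posPart_sub_sum_negPart (I : Finset V) (c : V → ℝ) :
    ∑ a ∈ I, (c a)⁺ • a - ∑ a ∈ I, (c a)⁻ • a = ∑ a ∈ I, c a • a := by
  simp only [← Finset.sum_sub_distrib, ← sub_smul, posPart_sub_negPart]

lemma IsRootBasis.sum_posPart_apply_sum_negPart_nonpos (hΔ : IsRootBasis B Δ) (hI : I ⊆ Δ)
    (c : V → ℝ) : B (∑ a ∈ I, (c a)⁺ • a) (∑ a ∈ I, (c a)⁻ • a) ≤ 0 :=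
  hΔ.sum_apply_sum_nonpos hI (fun a _ => posPart_nonneg (c a)) (fun a _ => negPart_nonneg (c a))
    fun a _ => (le_total (c a) 0).imp posPart_of_nonpos negPart_of_nonneg

lemma IsRootBasis.exists_timelike_mem_cone (hB : B.IsSymm) (hΔ : IsRootBasis B Δ) (hI : I ⊆ Δ)
    (hz : z ∈ Submodule.span ℝ (I : Set V)) (hzz : B z z < 0) : ∃ t ∈ cone I, B t t < 0 := by
  obtain ⟨c, -, rfl⟩ := Submodule.mem_span_finset.1 hz
  rw [← sum_posPart_sub_sum_negPart] at hzz
  rcases timelike_or_timelike_of_sub hB (hΔ.sum_posPart_apply_sum_negPart_nonpos hI c) hzz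
    with h | h
  · exact ⟨_, ⟨_, fun a _ => posPart_nonneg (c a), rfl⟩, h⟩
  · exact ⟨_, ⟨_, fun a _ => negPart_nonneg (c a), rfl⟩, h⟩

lemma IsLorentz.apply_pos_or_of_sub_eq (hB : B.IsSymm) (hL : IsLorentz B) (ht : B t t < 0)
    (ht' : B t' t' < 0) (htt' : 0 < B t t') (ha : 0 < a) (hb : 0 < b)
    (h : p - n = a • t - b • t') (hp : B p p < 0) (hpn : B p n ≤ 0) :
    0 < B t' p ∨ B n n < 0 ∧ 0 < B t n := by
  have hp0 : p ≠ 0 := by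
    rintro rfl
    simp at hp
  refine (hL.apply_ne_zero hB ht' hp0 hp.le).lt_or_gt.symm.imp_right fun ht'p => ?_
  have htp : 0 < B t p := by
    have := hL.apply_neg hB (u := -t) ht' (by simpa using ht) hp.le (by simpa [hB.eq t' t]) ht'p
    simpa using this
  have hn : n = p - a • t + b • t' := by
    rw [← sub_sub_cancel p n, h]
    module
  have htn : 0 < B t n := by
    rw [hn]
    simp only [map_sub, map_add, map_smul, smul_eq_mul]
    nlinarith
  have ht'n : B t' n < 0 := by
    rw [hn]
    simp only [map_sub, map_add, map_smul, smul_eq_mul, hB.eq t' t]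
    nlinarith
  refine ⟨?_, htn⟩
  calc B n n = B p n - a * B t n + b * B t' n := by
        nth_rw 1 [hn]
        simp
    _ < 0 := by nlinarith

lemma IsLorentz.timelike_and_apply_pos_or_of_sub_eq (hB : B.IsSymm) (hL : IsLorentz B)
    (ht : B t t < 0) (ht' : B t' t' < 0) (htt' : 0 < B t t') (ha : 0 < a) (hb : 0 < b)
    (h : p - n = a • t - b • t') (hpn : B p n ≤ 0) :
    B p p < 0 ∧ 0 < B t' p ∨ B n n < 0 ∧ 0 < B t n := by
  have timelike : B (p - n) (p - n) < 0 := by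
    rw [h]
    simp only [map_sub, map_smul, LinearMap.sub_apply, LinearMap.smul_apply, smul_eq_mul,
      hB.eq t' t]
    nlinarith [mul_pos (mul_pos ha hb) htt', mul_pos ha ha, mul_pos hb hb]
  have h' : n - p = b • t' - a • t := by rw [← neg_sub, h, neg_sub]
  rcases timelike_or_timelike_of_sub hB hpn timelike with hp | hn
  · exact (hL.apply_pos_or_of_sub_eq hB ht ht' htt' ha hb h hp hpn).imp_left (⟨hp, ·⟩)
  · exact (hL.apply_pos_or_of_sub_eq hB ht' ht (hB.eq t t' ▸ htt') hb ha h' hn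
      (hB.eq p n ▸ hpn)).symm.imp_right (⟨hn, ·⟩)

/-- Induction on the overlap of the supports: subtracting multiples of the two combinations so
as to cancel a common root shrinks the overlap. -/
lemma IsRootBasis.sum_apply_sum_neg (hB : B.IsSymm) (hΔ : IsRootBasis B Δ) (hL : IsLorentz B)
    {c d : V → ℝ} (hc : ∀ a ∈ Δ, 0 ≤ c a) (hd : ∀ a ∈ Δ, 0 ≤ d a)
    (ht : B (∑ a ∈ Δ, c a • a) (∑ a ∈ Δ, c a • a) < 0)
    (ht' : B (∑ a ∈ Δ, d a • a) (∑ a ∈ Δ, d a • a) < 0) :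
    B (∑ a ∈ Δ, c a • a) (∑ a ∈ Δ, d a • a) < 0 := by
  induction hk : {a ∈ Δ | c a ≠ 0 ∧ d a ≠ 0}.card using Nat.strong_induction_on
    generalizing c d with
  | _ k ih =>
  subst hk
  by_contra! hnonneg
  have ht'0 : ∑ a ∈ Δ, d a • a ≠ 0 := fun h => by simp [h] at ht'
  have hpos := hnonneg.lt_of_ne' (hL.apply_ne_zero hB ht ht'0 ht'.le)
  obtain ⟨i, hi, hci, hdi⟩ : ∃ i ∈ Δ, c i ≠ 0 ∧ d i ≠ 0 := by
    by_contra! hdisjoint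
    exact hpos.not_ge (hΔ.sum_apply_sum_nonpos subset_rfl hc hd
      fun a ha => or_iff_not_imp_left.2 (hdisjoint a ha))
  set e : V → ℝ := fun a => d i * c a - c i * d a with he
  have hdiff : ∑ a ∈ Δ, (e a)⁺ • a - ∑ a ∈ Δ, (e a)⁻ • a =
      d i • ∑ a ∈ Δ, c a • a - c i • ∑ a ∈ Δ, d a • a := by
    rw [sum_posPart_sub_sum_negPart]
    simp only [Finset.smul_sum, smul_smul, ← Finset.sum_sub_distrib, ← sub_smul, he]
  have hei : e i = 0 := sub_eq_zero.2 (mul_comm _ _)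
  rcases hL.timelike_and_apply_pos_or_of_sub_eq hB ht ht' hpos ((hd i hi).lt_of_ne' hdi)
    ((hc i hi).lt_of_ne' hci) hdiff (hΔ.sum_posPart_apply_sum_negPart_nonpos subset_rfl e)
    with ⟨hp, hpd⟩ | ⟨hn, hcn⟩
  · refine hpd.not_gt (hB.eq _ _ ▸ ih _ (Finset.card_lt_card ?_)
      (fun a _ => posPart_nonneg (e a)) hd hp ht' rfl)
    refine Finset.ssubset_iff_of_subset (fun a ha => ?_) |>.2 ⟨i, by simp [*], by simp [hei]⟩
    simp only [Finset.mem_filter, ne_eq, posPart_eq_zero, not_le] at ha ⊢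
    refine ⟨ha.1, fun hca => ha.2.1.not_ge ?_, ha.2.2⟩
    simp [he, hca, mul_nonneg (hc i hi) (hd a ha.1)]
  · refine hcn.not_gt (ih _ (Finset.card_lt_card ?_) hc (fun a _ => negPart_nonneg (e a))
      ht hn rfl)
    refine Finset.ssubset_iff_of_subset (fun a ha => ?_) |>.2 ⟨i, by simp [*], by simp [hei]⟩
    simp only [Finset.mem_filter, ne_eq, negPart_eq_zero, not_le] at ha ⊢
    refine ⟨ha.1, ha.2.1, fun hda => ha.2.2.not_ge ?_⟩
    simp [he, hda, mul_nonneg (hd i hi) (hc a ha.1)]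

theorem IsRootBasis.apply_neg_of_mem_cone (hB : B.IsSymm) (hΔ : IsRootBasis B Δ)
    (hL : IsLorentz B) (htΔ : t ∈ cone Δ) (ht : B t t < 0) (ht'Δ : t' ∈ cone Δ)
    (ht' : B t' t' < 0) : B t t' < 0 := by
  obtain ⟨c, hc, rfl⟩ := htΔ
  obtain ⟨d, hd, rfl⟩ := ht'Δ
  exact hΔ.sum_apply_sum_neg hB hL hc hd ht ht'

end TimelikeCone

/-! ### Supporting functionals -/

section SupportingFunctionals

variable [FiniteDimensional ℝ V] {Δ I K : Finset V} {f g : V →ₗ[ℝ] ℝ} {x z : V}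

lemma exists_functional_pos_of_zero_notMem_convexHull {s : Set V} (hs : s.Finite)
    (h0 : (0 : V) ∉ convexHull ℝ s) : ∃ f : V →ₗ[ℝ] ℝ, ∀ a ∈ s, 0 < f a := by
  let e := (Module.finBasis ℝ V).equivFun
  have h0' : 0 ∉ convexHull ℝ (e.toLinearMap '' s) := by
    rw [← LinearMap.image_convexHull]
    rintro ⟨x, hx, hex⟩
    exact h0 (e.map_eq_zero_iff.1 hex ▸ hx)
  obtain ⟨f, u, hu, hf⟩ := geometric_hahn_banach_point_closed (convex_convexHull ℝ _)
    ((hs.image e).isClosed_convexHull ℝ) h0'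
  rw [map_zero] at hu
  exact ⟨f.toLinearMap ∘ₗ e.toLinearMap, fun a ha =>
    hu.trans (hf _ (subset_convexHull ℝ _ (Set.mem_image_of_mem e ha)))⟩

lemma IsFace.exists_supporting_functional (h : IsFace (cone Δ) (cone I)) (hI : I ⊆ Δ) :
    ∃ f : V →ₗ[ℝ] ℝ, (∀ a ∈ I, f a = 0) ∧
      ∀ a ∈ Δ, a ∉ Submodule.span ℝ (I : Set V) → 0 < f a := by
  classical
  set S := Submodule.span ℝ (I : Set V)
  set s : Finset V := {a ∈ Δ | a ∉ S} with hs
  have h0 : (0 : V ⧸ S) ∉ convexHull ℝ (S.mkQ '' s) := by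
    rw [← LinearMap.image_convexHull]
    rintro ⟨x, hx, hxS⟩
    obtain ⟨c, hc, hc1, rfl⟩ := Finset.mem_convexHull'.1 hx
    rw [Submodule.mkQ_apply, Submodule.Quotient.mk_eq_zero] at hxS
    obtain ⟨a, ha, hca⟩ := Finset.exists_ne_zero_of_sum_ne_zero (hc1.trans_ne one_ne_zero)
    have mem_cone : ∀ b ∈ s, c b • b ∈ cone Δ := fun b hb =>
      smul_mem_cone (hc b hb) (subset_cone (Finset.mem_filter.1 hb).1)
    have hxI := h.mem_of_mem_span hI (sum_mem_cone mem_cone) hxS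
    rw [← Finset.add_sum_erase _ _ ha] at hxI
    have haS := cone_subset_span I <| h.mem_of_add_mem (mem_cone a ha)
      (sum_mem_cone fun b hb => mem_cone b (Finset.mem_of_mem_erase hb)) hxI
    exact (Finset.mem_filter.1 ha).2 ((S.smul_mem_iff hca).1 haS)
  obtain ⟨f, hf⟩ := exists_functional_pos_of_zero_notMem_convexHull
    (s.finite_toSet.image S.mkQ) h0
  refine ⟨f ∘ₗ S.mkQ, fun a ha => ?_, fun a ha haS => hf _ ⟨a, by simp [hs, ha, haS], rfl⟩⟩
  rw [LinearMap.comp_apply, Submodule.mkQ_apply,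
    (Submodule.Quotient.mk_eq_zero S).2 (Submodule.subset_span ha), map_zero]

lemma mem_of_apply_eq_zero_of_finrank_add_one_eq {S T : Submodule ℝ V} (hST : S ≤ T)
    (hS : S ≤ LinearMap.ker f) (hrank : Module.finrank ℝ S + 1 = Module.finrank ℝ T)
    (hz : z ∈ T) (hfz : f z ≠ 0) (hx : x ∈ T) (hfx : f x = 0) : x ∈ S := by
  have hlt : T ⊓ LinearMap.ker f < T := inf_le_left.lt_of_not_ge fun h => hfz (h hz).2
  have hrank' := Submodule.finrank_lt_finrank_of_lt hlt
  rw [Submodule.eq_of_le_of_finrank_le (le_inf hST hS) (by omega)]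
  exact ⟨hx, hfx⟩

lemma exists_functional_apply_neg_of_finrank_add_one_lt {S : Submodule ℝ V} (z : V)
    (hrank : Module.finrank ℝ S + 1 < Module.finrank ℝ (Submodule.span ℝ (I : Set V))) :
    ∃ g : V →ₗ[ℝ] ℝ, S ≤ LinearMap.ker g ∧ g z = 0 ∧ ∃ b ∈ I, g b < 0 := by
  obtain ⟨b, hbI, hb⟩ : ∃ b ∈ I, b ∉ S ⊔ ℝ ∙ z := by
    by_contra! hcon
    have := Submodule.finrank_mono (Submodule.span_le.2 hcon)
    have := Submodule.finrank_add_le_finrank_add_finrank S (ℝ ∙ z)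
    have := finrank_span_le_card (R := ℝ) ({z} : Set V)
    simp only [Set.toFinset_singleton, Finset.card_singleton] at this
    omega
  obtain ⟨g, hgb, hg⟩ := Submodule.exists_le_ker_of_notMem hb
  have hgS : S ≤ LinearMap.ker g := le_sup_left.trans hg
  have hgz : g z = 0 := hg (Submodule.mem_sup_right (Submodule.mem_span_singleton_self z))
  rcases hgb.lt_or_gt with hneg | hpos
  · exact ⟨g, hgS, hgz, b, hbI, hneg⟩
  · exact ⟨-g, fun y hy => by simpa using hgS hy, by simp [hgz], b, hbI, neg_neg_of_pos hpos⟩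

/-- Rotate `f` around the span of its zeros until it vanishes on a further element of `I`. -/
lemma exists_functional_span_filter_lt (hf : ∀ a ∈ I, 0 ≤ f a) (hfz : f z < 0)
    (hrank : Module.finrank ℝ (Submodule.span ℝ (↑{a ∈ I | f a = 0} : Set V)) + 1 <
      Module.finrank ℝ (Submodule.span ℝ (I : Set V))) :
    ∃ f' : V →ₗ[ℝ] ℝ, (∀ a ∈ I, 0 ≤ f' a) ∧ f' z < 0 ∧
      Submodule.span ℝ (↑{a ∈ I | f a = 0} : Set V) <
        Submodule.span ℝ (↑{a ∈ I | f' a = 0} : Set V) := by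
  obtain ⟨g, hgS, hgz, b, hbI, hgb⟩ := exists_functional_apply_neg_of_finrank_add_one_lt z hrank
  obtain ⟨r, hnonneg, m, hmI, hgm, hfm⟩ := exists_add_smul_nonneg hf hbI hgb
  refine ⟨f + r • g, hnonneg, by simpa [hgz] using hfz, ?_⟩
  refine (Submodule.span_mono fun a ha => ?_).lt_of_not_ge fun hle => ?_
  · have hga : g a = 0 := hgS (Submodule.subset_span ha)
    simp [Finset.mem_filter.1 (Finset.mem_coe.1 ha), hga]
  · exact hgm.ne (hgS (hle (Submodule.subset_span (Finset.mem_filter.2 ⟨hmI, hfm⟩))))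

lemma exists_functional_finrank_span_filter_add_one (hz : z ∈ Submodule.span ℝ (I : Set V))
    (hf : ∀ a ∈ I, 0 ≤ f a) (hfz : f z < 0) :
    ∃ f' : V →ₗ[ℝ] ℝ, (∀ a ∈ I, 0 ≤ f' a) ∧ f' z < 0 ∧
      Module.finrank ℝ (Submodule.span ℝ (↑{a ∈ I | f' a = 0} : Set V)) + 1 =
        Module.finrank ℝ (Submodule.span ℝ (I : Set V)) := by
  induction hn : Module.finrank ℝ (Submodule.span ℝ (I : Set V)) -
      Module.finrank ℝ (Submodule.span ℝ (↑{a ∈ I | f a = 0} : Set V))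
    using Nat.strong_induction_on generalizing f with
  | _ n ih =>
  have hlt := Submodule.finrank_lt_finrank_of_lt <|
    (span_filter_le_span I f).lt_of_not_ge fun hle => hfz.ne (span_filter_le_ker I f (hle hz))
  rcases (Nat.succ_le_of_lt hlt).eq_or_lt with heq | hlt'
  · exact ⟨f, hf, hfz, heq⟩
  · obtain ⟨f', hf', hf'z, hspan⟩ := exists_functional_span_filter_lt hf hfz hlt'
    have := Submodule.finrank_lt_finrank_of_lt hspan
    exact ih _ (by omega) hf' hf'z rfl

end SupportingFunctionals

/-! ### Weights -/

section Weights

variable {Δ I J K : Finset V} {f g : V →ₗ[ℝ] ℝ} {ω η x : V} {l : ℕ}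

lemma IsWeight.mem_chamber (hB : B.IsSymm) (h : IsWeight B Δ I ω) : ω ∈ chamber B Δ := by
  intro α hα
  rw [hB.eq]
  by_cases hαI : α ∈ I
  · exact (h.2.1 α hαI).ge
  · exact (h.2.2.1 α hα hαI).le

lemma IsWeight.ne_zero (h : IsWeight B Δ I ω) : ω ≠ 0 := by
  rintro rfl
  obtain ⟨α, -, -, hα⟩ := h.2.2.2.2
  simp at hα

lemma IsWeight.mem_span_iff [FiniteDimensional ℝ V] (hB : B.IsSymm) (h : IsWeight B Δ I ω) :
    x ∈ Submodule.span ℝ (I : Set V) ↔ B ω x = 0 := by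
  have hle : Submodule.span ℝ (I : Set V) ≤ LinearMap.ker (B ω) :=
    Submodule.span_le.2 fun a ha => (hB.eq ω a).trans (h.2.1 a ha)
  obtain ⟨α, -, -, hα⟩ := h.2.2.2.2
  refine ⟨fun hx => hle hx, fun hx => ?_⟩
  refine mem_of_apply_eq_zero_of_finrank_add_one_eq le_top hle
    (h.1.2.2.trans (finrank_top ℝ V).symm) (z := α) trivial ?_ trivial hx
  rw [hB.eq, hα]
  exact one_ne_zero

lemma IsWeight.eq_of_eq_smul (hB : B.IsSymm) (hω : IsWeight B Δ I ω) (hη : IsWeight B Δ J η)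
    {c : ℝ} (h : η = c • ω) : η = ω := by
  obtain ⟨α, hα, -, hαω⟩ := hω.2.2.2.2
  obtain ⟨β, hβ, -, hβη⟩ := hη.2.2.2.2
  have hβω : 0 ≤ B β ω := hB.eq β ω ▸ hω.mem_chamber hB β hβ
  have hα' : B α η = c := by rw [h, map_smul, hαω, smul_eq_mul, mul_one]
  have hβ' : c * B β ω = 1 := by rw [← hβη, h, map_smul, smul_eq_mul]
  have hc : 0 < c := by
    by_contra! hc
    linarith [mul_nonpos_of_nonpos_of_nonneg hc hβω]
  have hβI : β ∉ I := fun hβI => by simp [hω.2.1 β hβI] at hβ'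
  have hαJ : α ∉ J := fun hαJ => hc.ne' (hα' ▸ hη.2.1 α hαJ)
  have hc1 : 1 ≤ c := hα' ▸ hη.2.2.2.1 α hα hαJ
  have hβ1 := hω.2.2.2.1 β hβ hβI
  have : c = 1 := le_antisymm (by nlinarith) hc1
  rw [h, this, one_smul]

lemma IsFacial.exists_notMem_span (hΔ : IsRootBasis B Δ) (hI : IsFacial Δ I (l + 1)) :
    ∃ a ∈ Δ, a ∉ Submodule.span ℝ (I : Set V) := by
  by_contra! h
  have htop : Submodule.span ℝ (I : Set V) = ⊤ :=
    top_unique (hΔ.spans ▸ Submodule.span_le.2 h)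
  have hrank := hI.2.2
  rw [htop, finrank_top] at hrank
  omega

variable [FiniteDimensional ℝ V]

lemma IsFacial.exists_isWeight_eq_smul (hB : B.IsSymm) (hΔ : IsRootBasis B Δ)
    (hnd : B.Nondegenerate) (hI : IsFacial Δ I 1) (hfI : ∀ a ∈ I, f a = 0)
    (hf : ∀ a ∈ Δ, a ∉ I → 0 < f a) :
    ∃ ω, ∃ c : ℝ, 0 < c ∧ B ω = c • f ∧ IsWeight B Δ I ω := by
  classical
  obtain ⟨b, hb, hbI⟩ := hI.exists_notMem_span hΔ
  obtain ⟨m, hm, hmin⟩ := Finset.exists_min_image (Δ \ I) f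
    ⟨b, Finset.mem_sdiff.2 ⟨hb, fun h => hbI (Submodule.subset_span h)⟩⟩
  obtain ⟨hmΔ, hmI⟩ := Finset.mem_sdiff.1 hm
  have hfm := hf m hmΔ hmI
  obtain ⟨ω, hω⟩ : ∃ ω, B ω = (f m)⁻¹ • f :=
    ⟨(B.toDual hnd).symm ((f m)⁻¹ • f), LinearMap.ext fun x => by
      rw [← B.toDual_def hnd, LinearEquiv.apply_symm_apply]⟩
  have apply_ω : ∀ x, B x ω = (f m)⁻¹ * f x := fun x => by
    rw [hB.eq, hω, LinearMap.smul_apply, smul_eq_mul]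
  refine ⟨ω, (f m)⁻¹, inv_pos.2 hfm, hω, hI, fun α hα => ?_, fun α hα hαI => ?_,
    fun α hα hαI => ?_, m, hmΔ, hmI, ?_⟩
  · rw [apply_ω, hfI α hα, mul_zero]
  · rw [apply_ω]
    exact mul_pos (inv_pos.2 hfm) (hf α hα hαI)
  · rw [apply_ω, inv_mul_eq_div, one_le_div hfm]
    exact hmin α (Finset.mem_sdiff.2 ⟨hα, hαI⟩)
  · rw [apply_ω, inv_mul_cancel₀ hfm.ne']

lemma IsFacial.exists_isWeight (hB : B.IsSymm) (hΔ : IsRootBasis B Δ) (hnd : B.Nondegenerate)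
    (hI : IsFacial Δ I 1) : ∃ ω, IsWeight B Δ I ω := by
  obtain ⟨f, hfI, hf⟩ := hI.2.1.exists_supporting_functional hI.1
  obtain ⟨ω, -, -, -, hω⟩ := hI.exists_isWeight_eq_smul hB hΔ hnd hfI fun a ha haI =>
    hf a ha (hΔ.notMem_span hI.1 hI.2.1 ha haI)
  exact ⟨ω, hω⟩

/-- Tilting `g` by the largest multiple of `f` that keeps it nonnegative on `Δ` yields a facet. -/
lemma IsFacial.exists_isFacial_filter_sub_smul (hΔ : IsRootBasis B Δ) (hK : IsFacial Δ K 2)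
    (hfK : ∀ a ∈ K, f a = 0) (hf : ∀ a ∈ Δ, a ∉ K → 0 < f a) (hgK : ∀ a ∈ K, g a = 0)
    (hfx : f x = 0) (hgx : g x ≠ 0) :
    ∃ r : ℝ, (∀ a ∈ Δ, 0 ≤ (g - r • f) a) ∧ IsFacial Δ {a ∈ Δ | (g - r • f) a = 0} 1 := by
  classical
  obtain ⟨b, hb, hbK⟩ := hK.exists_notMem_span hΔ
  obtain ⟨m, hm, hmin⟩ := Finset.exists_min_image (Δ \ K) (fun a => g a / f a)
    ⟨b, Finset.mem_sdiff.2 ⟨hb, fun h => hbK (Submodule.subset_span h)⟩⟩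
  obtain ⟨hmΔ, hmK⟩ := Finset.mem_sdiff.1 hm
  set h := g - (g m / f m) • f with hh
  have hhK : ∀ a ∈ K, h a = 0 := fun a ha => by simp [hh, hfK a ha, hgK a ha]
  have hhm : h m = 0 := by simp [hh, div_mul_cancel₀ _ (hf m hmΔ hmK).ne']
  have hhx : h x ≠ 0 := by simpa [hh, hfx] using hgx
  have hnonneg : ∀ a ∈ Δ, 0 ≤ h a := by
    intro a ha
    by_cases haK : a ∈ K
    · exact (hhK a haK).ge
    · have := hmin a (Finset.mem_sdiff.2 ⟨ha, haK⟩)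
      rw [le_div_iff₀ (hf a ha haK)] at this
      simpa [hh] using this
  refine ⟨_, hnonneg, Finset.filter_subset _ _, isFace_cone_filter hnonneg, ?_⟩
  have lower : Submodule.span ℝ (K : Set V) < Submodule.span ℝ (↑{a ∈ Δ | h a = 0} : Set V) := by
    refine (Submodule.span_mono fun a ha => ?_).lt_of_not_ge fun hle => ?_
    · simp [hK.1 ha, hhK a ha]
    · exact hΔ.notMem_span hK.1 hK.2.1 hmΔ hmK (hle (Submodule.subset_span (by simp [hmΔ, hhm])))
  have upper : Submodule.span ℝ (↑{a ∈ Δ | h a = 0} : Set V) ≠ ⊤ := fun htop =>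
    hhx (span_filter_le_ker Δ h (htop ▸ Submodule.mem_top))
  have hlower := Submodule.finrank_lt_finrank_of_lt lower
  have hupper := Submodule.finrank_lt upper
  have hrank := hK.2.2
  change Module.finrank ℝ (Submodule.span ℝ (↑{a ∈ Δ | h a = 0} : Set V)) + 1 = _
  omega

lemma IsFacial.exists_isWeight_eq_smul_sub_smul (hB : B.IsSymm) (hΔ : IsRootBasis B Δ)
    (hnd : B.Nondegenerate) (hK : IsFacial Δ K 2) (hfK : ∀ a ∈ K, f a = 0)
    (hf : ∀ a ∈ Δ, a ∉ K → 0 < f a) (hgK : ∀ a ∈ K, g a = 0) (hfx : f x = 0) (hgx : g x ≠ 0) :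
    ∃ I, ∃ ω, ∃ c r : ℝ, 0 < c ∧ B ω = c • (g - r • f) ∧ IsWeight B Δ I ω := by
  obtain ⟨r, hnonneg, hfacial⟩ := hK.exists_isFacial_filter_sub_smul hΔ hfK hf hgK hfx hgx
  obtain ⟨ω, c, hc, hω, hweight⟩ := hfacial.exists_isWeight_eq_smul hB hΔ hnd
    (fun a ha => (Finset.mem_filter.1 ha).2) fun a ha haI =>
      (hnonneg a ha).lt_of_ne' fun h => haI (Finset.mem_filter.2 ⟨ha, h⟩)
  exact ⟨_, ω, c, r, hc, hω, hweight⟩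

theorem IsFacial.exists_weights_orthogonal (hB : B.IsSymm) (hΔ : IsRootBasis B Δ)
    (hnd : B.Nondegenerate) (hK : IsFacial Δ K 2) :
    ∃ ω ∈ weights B Δ, ∃ η ∈ weights B Δ, (∀ c : ℝ, ω ≠ c • η) ∧
      ∀ x ∈ Submodule.span ℝ (K : Set V), B ω x = 0 ∧ B η x = 0 := by
  obtain ⟨f, hfK, hf⟩ := hK.2.1.exists_supporting_functional hK.1
  have hf' : ∀ a ∈ Δ, a ∉ K → 0 < f a := fun a ha haK =>
    hf a ha (hΔ.notMem_span hK.1 hK.2.1 ha haK)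
  obtain ⟨x, hfx, hxK⟩ : ∃ x, f x = 0 ∧ x ∉ Submodule.span ℝ (K : Set V) := by
    by_contra! hle
    have hker := Submodule.finrank_mono (show LinearMap.ker f ≤ _ from hle)
    have hrange := LinearMap.finrank_range_add_finrank_ker f
    have hrange' := Submodule.finrank_le (LinearMap.range f)
    have hrank := hK.2.2
    rw [Module.finrank_self] at hrange'
    omega
  obtain ⟨g, hgx, hgK⟩ := Submodule.exists_le_ker_of_notMem hxK
  have hgK' : ∀ a ∈ K, g a = 0 := fun a ha => hgK (Submodule.subset_span ha)
  obtain ⟨I, ω, c, r, hc, hω, hωw⟩ := hK.exists_isWeight_eq_smul_sub_smul hB hΔ hnd hfK hf'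
    hgK' hfx hgx
  obtain ⟨J, η, d, s, hd, hη, hηw⟩ := hK.exists_isWeight_eq_smul_sub_smul (g := -g) hB hΔ hnd
    hfK hf' (fun a ha => by simp [hgK' a ha]) hfx (by simpa using hgx)
  have hfK' : Submodule.span ℝ (K : Set V) ≤ LinearMap.ker f := Submodule.span_le.2 hfK
  refine ⟨ω, ⟨I, hωw⟩, η, ⟨J, hηw⟩, fun k hk => ?_, fun y hy => ?_⟩
  · have heq := congrArg (B · x) (hηw.eq_of_eq_smul hB hωw hk)
    simp only [hω, hη, LinearMap.smul_apply, LinearMap.sub_apply, LinearMap.neg_apply, hfx,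
      smul_eq_mul, mul_zero, sub_zero] at heq
    have : (c + d) * g x = 0 := by linarith
    exact hgx ((mul_eq_zero.1 this).resolve_left (by positivity))
  · have hfy : f y = 0 := hfK' hy
    have hgy : g y = 0 := hgK hy
    simp [hω, hη, hfy, hgy]

end Weights

/-! ### Root systems of level at most two -/

section LevelTwo

variable {Δ I J : Finset V} {ω η p t x y : V}

lemma exists_timelike_mem_span_pair (hB : B.IsSymm) (hp : 0 < B p p) (ht : B t t < 0)
    (hpt : 0 ≤ B p t) :
    ∃ y ∈ Submodule.span ℝ {p, t}, B p y < 0 ∧ B y y < 0 ∧ B y t < 0 := by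
  set z := rejection B p t with hz
  have hdisc : B p p * B t t - B p t ^ 2 < 0 := by
    nlinarith [mul_neg_of_pos_of_neg hp ht, sq_nonneg (B p t)]
  have hpz : B p z = 0 := apply_rejection_self p t
  have hzz : B z z < 0 := by
    rw [rejection_apply_rejection hB]
    exact mul_neg_of_pos_of_neg hp hdisc
  have hzt : B z t < 0 := by
    rw [rejection_apply]
    linarith
  obtain ⟨r, hr, hrz⟩ : ∃ r : ℝ, 1 ≤ r ∧ r * B z z < -B p p := by
    refine ⟨B p p / -B z z + 1, by simpa using (div_pos hp (neg_pos.2 hzz)).le, ?_⟩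
    rw [add_mul, div_neg, neg_mul, div_mul_cancel₀ _ hzz.ne]
    linarith
  refine ⟨r • z - p, Submodule.mem_span_pair.2 ⟨-(r * B p t) - 1, r * B p p, ?_⟩, ?_, ?_, ?_⟩
  · rw [hz, rejection]
    module
  · simpa [hpz] using hp
  · simp only [map_sub, map_smul, LinearMap.sub_apply, LinearMap.smul_apply, smul_eq_mul,
      hB.eq z p, hpz]
    nlinarith
  · simp only [map_sub, map_smul, LinearMap.sub_apply, LinearMap.smul_apply, smul_eq_mul]
    nlinarith

variable [FiniteDimensional ℝ V]

/-- If `p` were space-like, some `y` in the same time-like cone as `t` would lie outside `cone I`,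
and the segment from `t` to `y` would meet the span of a ridge. -/
lemma LevelLE.apply_self_nonpos_of_facet (hB : B.IsSymm) (hlev : LevelLE B Δ 2)
    (hI : IsFacial Δ I 1) (htI : t ∈ cone I) (ht : B t t < 0)
    (hp : p ∈ Submodule.span ℝ (I : Set V)) (hpI : ∀ a ∈ I, 0 ≤ B p a) : B p p ≤ 0 := by
  by_contra! hpp
  obtain ⟨y, hy, hpy, hyy, hyt⟩ :=
    exists_timelike_mem_span_pair hB hpp ht (nonneg_of_mem_cone hpI htI)
  have htS := cone_subset_span I htI
  have hyS : y ∈ Submodule.span ℝ (I : Set V) :=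
    Submodule.span_le.2 (Set.pair_subset hp htS) hy
  obtain ⟨f, hf, hfy, hrank⟩ := exists_functional_finrank_span_filter_add_one hyS hpI hpy
  have hridge : IsFacial Δ {a ∈ I | f a = 0} 2 :=
    ⟨(Finset.filter_subset _ _).trans hI.1, hI.2.1.trans (isFace_cone_filter hf),
      by rw [← hI.2.2, ← hrank]⟩
  have hft := nonneg_of_mem_cone hf htI
  set x := f t • y - f y • t with hx
  have hxK := mem_of_apply_eq_zero_of_finrank_add_one_eq (x := x) (span_filter_le_span I f)
    (span_filter_le_ker I f) hrank hyS hfy.ne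
    (sub_mem (Submodule.smul_mem _ _ hyS) (Submodule.smul_mem _ _ htS)) (by simp [hx, mul_comm])
  have hxx : B x x = f t ^ 2 * B y y + 2 * (f t * -f y) * B y t + f y ^ 2 * B t t := by
    simp only [hx, map_sub, map_smul, LinearMap.sub_apply, LinearMap.smul_apply, smul_eq_mul,
      hB.eq t y]
    ring
  have h1 := mul_nonpos_of_nonneg_of_nonpos (sq_nonneg (f t)) hyy.le
  have h2 := mul_nonpos_of_nonneg_of_nonpos (mul_nonneg hft (neg_nonneg.2 hfy.le)) hyt.le
  have h3 := mul_neg_of_pos_of_neg (sq_pos_of_neg hfy) ht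
  exact (hlev _ hridge x hxK).not_gt (by linarith)

lemma IsWeight.exists_timelike_mem_cone (hB : B.IsSymm) (hΔ : IsRootBasis B Δ)
    (hL : IsLorentz B) (hω : IsWeight B Δ I ω) (hωω : 0 < B ω ω) :
    ∃ t ∈ cone I, B t t < 0 := by
  obtain ⟨z, hωz, hz⟩ := hL.exists_timelike_orthogonal hB hωω
  exact hΔ.exists_timelike_mem_cone hB hω.1.1 ((hω.mem_span_iff hB).2 hωz) hz

lemma LevelLE.mul_le_sq (hB : B.IsSymm) (hΔ : IsRootBasis B Δ) (hL : IsLorentz B)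
    (hlev : LevelLE B Δ 2) (hω : IsWeight B Δ I ω) (hωω : 0 < B ω ω) (hy : ∀ a ∈ I, 0 ≤ B y a) :
    B ω ω * B y y ≤ B ω y ^ 2 := by
  obtain ⟨t, htI, ht⟩ := hω.exists_timelike_mem_cone hB hΔ hL hωω
  have hnonpos := hlev.apply_self_nonpos_of_facet hB hω.1 htI ht
    ((hω.mem_span_iff hB).2 (apply_rejection_self ω y)) fun a ha => by
      rw [rejection_apply, hB.eq ω a, hω.2.1 a ha, mul_zero, sub_zero]
      exact mul_nonneg hωω.le (hy a ha)
  rw [rejection_apply_rejection hB] at hnonpos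
  exact sub_nonpos.1 (nonpos_of_mul_nonpos_right hnonpos hωω)

lemma LevelLE.apply_self_le_sq (hB : B.IsSymm) (hΔ : IsRootBasis B Δ) (hL : IsLorentz B)
    (hlev : LevelLE B Δ 2) (hω : IsWeight B Δ I ω) (hωω : 0 < B ω ω) {α : V} (hα : α ∈ Δ)
    (hωα : B ω α ≠ 0) : B ω ω ≤ B ω α ^ 2 := by
  have hαI : α ∉ I := fun hαI => hωα ((hB.eq ω α).trans (hω.2.1 α hαI))
  have := hlev.mul_le_sq hB hΔ hL hω hωω (y := -α) fun a ha => by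
    have := hΔ.apply_nonpos hα (hω.1.1 ha) (ne_of_mem_of_not_mem ha hαI).symm
    simpa using this
  simpa [hΔ.unit α hα] using this

lemma IsWeight.apply_rejection_pos (hB : B.IsSymm) (hL : IsLorentz B) (hω : IsWeight B Δ I ω)
    (hωω : 0 < B ω ω) (hη : η ∈ chamber B Δ) (hne : ∀ c : ℝ, η ≠ c • ω)
    (hsq : B ω ω * B η η ≤ B ω η ^ 2) (htI : t ∈ cone I) (ht : B t t < 0) :
    0 < B t (rejection B ω η) := by
  have causal := rejection_apply_rejection_nonpos hB hωω.le hsq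
  refine lt_of_le_of_ne ?_ (hL.apply_ne_zero hB ht (rejection_ne_zero hωω.ne' hne) causal).symm
  have hωt : B t ω = 0 := (hB.eq t ω).trans ((hω.mem_span_iff hB).1 (cone_subset_span I htI))
  rw [apply_rejection, hωt, mul_zero, sub_zero, hB.eq t η]
  exact mul_nonneg hωω.le (nonneg_of_mem_cone hη (cone_mono hω.1.1 htI))

lemma LevelLE.apply_weight_weight_nonpos (hB : B.IsSymm) (hΔ : IsRootBasis B Δ)
    (hL : IsLorentz B) (hlev : LevelLE B Δ 2) (hω : IsWeight B Δ I ω) (hωω : 0 < B ω ω)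
    (hη : IsWeight B Δ J η) (hηη : 0 < B η η) (hne : ∀ c : ℝ, η ≠ c • ω) : B ω η ≤ 0 := by
  by_contra! hωη
  have hsq := hlev.mul_le_sq hB hΔ hL hω hωω fun a ha => hη.mem_chamber hB a (hω.1.1 ha)
  have hsq' := hlev.mul_le_sq hB hΔ hL hη hηη fun a ha => hω.mem_chamber hB a (hη.1.1 ha)
  have hne' : ∀ c : ℝ, ω ≠ c • η := fun c h => hne 1 (by simp [hη.eq_of_eq_smul hB hω h])
  obtain ⟨t, htI, ht⟩ := hω.exists_timelike_mem_cone hB hΔ hL hωω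
  obtain ⟨t', ht'J, ht'⟩ := hη.exists_timelike_mem_cone hB hΔ hL hηη
  have ht't := hΔ.apply_neg_of_mem_cone hB hL (cone_mono hη.1.1 ht'J) ht' (cone_mono hω.1.1 htI) ht
  set u := -rejection B ω η with hu
  set v := -rejection B η ω with hv
  have huu : B u u ≤ 0 := by
    simpa [hu] using rejection_apply_rejection_nonpos hB hωω.le hsq
  have hvv : B v v ≤ 0 := by
    simpa [hv] using rejection_apply_rejection_nonpos hB hηη.le hsq'
  have htu : B t u < 0 := by
    rw [hu, map_neg]
    exact neg_neg_of_pos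
      (hω.apply_rejection_pos hB hL hωω (hη.mem_chamber hB) hne hsq htI ht)
  have ht'v : B t' v < 0 := by
    rw [hv, map_neg]
    exact neg_neg_of_pos
      (hη.apply_rejection_pos hB hL hηη (hω.mem_chamber hB) hne' hsq' ht'J ht')
  have htv := hL.apply_neg hB ht' ht hvv ht't ht'v
  rcases hL.apply_neg_or_eq_smul hB ht huu hvv htu htv with huv | ⟨r, hr, hvu⟩
  · have : B u v = B ω η * (B ω η ^ 2 - B ω ω * B η η) := by
      rw [← rejection_apply_rejection_swap hB, hu, hv, map_neg, map_neg, LinearMap.neg_apply,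
        neg_neg]
    exact huv.not_ge (this ▸ mul_nonneg hωη.le (sub_nonneg.2 hsq))
  · obtain ⟨c, hc⟩ := exists_eq_smul_of_rejection_eq_smul hB hωω hωη hr
      (by simpa [hu, hv] using hvu)
    exact hne c hc

end LevelTwo

/-! ### The packing of the orbit of the weights -/

section Packing

variable {Δ I J : Finset V} {ω η x y : V} {l : List V}

lemma IsRootBasis.apply_weylGroup (hB : B.IsSymm) (hΔ : IsRootBasis B Δ) {w : V ≃ₗ[ℝ] V}
    (hw : w ∈ weylGroup B Δ) (x y : V) : B (w x) (w y) = B x y := by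
  obtain ⟨l, hl, hlw⟩ := exists_word_eq hΔ.unit hw
  have := apply_word_word hB (fun α hα => hΔ.unit α (hl α hα)) x y
  rwa [hlw] at this

lemma weights_subset_Omega (B : LinearMap.BilinForm ℝ V) (Δ : Finset V) :
    weights B Δ ⊆ Omega B Δ :=
  fun ω hω => ⟨1, one_mem _, ω, hω, rfl⟩

lemma IsRootBasis.isFacial_zero (hΔ : IsRootBasis B Δ) : IsFacial Δ Δ 0 :=
  ⟨subset_rfl, ⟨subset_rfl, convex_cone Δ, fun _ hx _ hy _ _ _ _ => ⟨hx, hy⟩⟩,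
    by rw [hΔ.spans, finrank_top, add_zero]⟩

lemma IsLorentz.not_levelLE_zero (hL : IsLorentz B) (hΔ : IsRootBasis B Δ) :
    ¬ LevelLE B Δ 0 := by
  intro hlev
  obtain ⟨t, ht⟩ := hL.2.1
  exact ht.not_ge (hlev Δ hΔ.isFacial_zero t (hΔ.spans ▸ Submodule.mem_top))

variable [FiniteDimensional ℝ V]

theorem IsLorentz.not_levelLE_one_iff (hB : B.IsSymm) (hL : IsLorentz B)
    (hΔ : IsRootBasis B Δ) : ¬ LevelLE B Δ 1 ↔ ∃ x ∈ Omega B Δ, 0 < B x x := by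
  constructor
  · intro hlev
    simp only [LevelLE, not_forall, not_le] at hlev
    obtain ⟨I, hI, z, hz, hzz⟩ := hlev
    obtain ⟨ω, hω⟩ := hI.exists_isWeight hB hΔ hL.1
    have hzω : B z ω = 0 := (hB.eq z ω).trans ((hω.mem_span_iff hB).1 hz)
    exact ⟨ω, weights_subset_Omega B Δ ⟨I, hω⟩, hL.pos_of_orthogonal hB hzz hzω hω.ne_zero⟩
  · rintro ⟨_, ⟨w, hw, ω, ⟨I, hω⟩, rfl⟩, hωω⟩ hlev
    rw [hΔ.apply_weylGroup hB hw] at hωω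
    obtain ⟨z, hωz, hzz⟩ := hL.exists_timelike_orthogonal hB hωω
    exact hzz.not_ge (hlev I hω.1 z ((hω.mem_span_iff hB).2 hωz))

lemma LevelLE.word_apply_eq_or_apply_word_nonpos (hB : B.IsSymm) (hΔ : IsRootBasis B Δ)
    (hL : IsLorentz B) (hlev : LevelLE B Δ 2) (hω : IsWeight B Δ I ω) (hωω : 0 < B ω ω)
    (hη : IsWeight B Δ J η) (hηη : 0 < B η η) (hl : IsReduced B Δ l) :
    word B l η = ω ∨ B ω (word B l η) ≤ 0 ∧ B ω ω * B η η ≤ B ω (word B l η) ^ 2 := by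
  by_cases hprop : ∃ c : ℝ, η = c • ω
  · obtain rfl := hω.eq_of_eq_smul hB hη hprop.choose_spec
    refine (hΔ.word_apply_eq_or_apply_word_le hB (hω.mem_chamber hB)
      (fun α => hlev.apply_self_le_sq hB hΔ hL hω hωω) hl).imp_right fun hle => ⟨?_, ?_⟩
    · linarith
    · nlinarith
  · push Not at hprop
    have hnonpos := hlev.apply_weight_weight_nonpos hB hΔ hL hω hωω hη hηη hprop
    have hsq := hlev.mul_le_sq hB hΔ hL hω hωω fun a ha => hη.mem_chamber hB a (hω.1.1 ha)
    have hle := nonneg_of_mem_cone (f := B ω) (hω.mem_chamber hB)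
      (hΔ.word_apply_sub_word_append_apply_mem_cone hB (l₁ := []) (hη.mem_chamber hB) hl)
    simp only [word_nil, Module.End.one_apply, List.nil_append, map_sub] at hle
    exact Or.inr ⟨by linarith, by nlinarith⟩

lemma LevelLE.disjointVec (hB : B.IsSymm) (hΔ : IsRootBasis B Δ) (hL : IsLorentz B)
    (hlev : LevelLE B Δ 2) (hx : x ∈ Omega B Δ) (hy : y ∈ Omega B Δ) (hxx : 0 < B x x)
    (hyy : 0 < B y y) (hne : ∀ c : ℝ, y ≠ c • x) : DisjointVec B x y := by
  obtain ⟨w, hw, ω, ⟨I, hω⟩, rfl⟩ := hx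
  obtain ⟨v, hv, η, ⟨J, hη⟩, rfl⟩ := hy
  have hωω := (hΔ.apply_weylGroup hB hw ω ω).symm.trans_gt hxx
  have hηη := (hΔ.apply_weylGroup hB hv η η).symm.trans_gt hyy
  obtain ⟨l₀, hl₀, hword⟩ := exists_word_eq hΔ.unit (mul_mem (inv_mem hw) hv)
  obtain ⟨l, hll₀, hl⟩ := exists_isReduced B hl₀
  have hvη : v η = w (word B l η) := by
    rw [hll₀, hword]
    exact (w.apply_symm_apply (v η)).symm
  rcases hlev.word_apply_eq_or_apply_word_nonpos hB hΔ hL hω hωω hη hηη hl with heq | ⟨h, hsq⟩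
  · exact absurd (by rw [hvη, heq, one_smul]) (hne 1)
  · refine disjointVec_of_mul_le_sq hB hxx ?_ ?_ hne
    · rwa [hvη, hΔ.apply_weylGroup hB hw]
    · rwa [hΔ.apply_weylGroup hB hv, hvη, hΔ.apply_weylGroup hB hw, hΔ.apply_weylGroup hB hw]

lemma IsLorentz.levelLE_two_of_disjointVec (hB : B.IsSymm) (hL : IsLorentz B)
    (hΔ : IsRootBasis B Δ)
    (h : ∀ x ∈ Omega B Δ, ∀ y ∈ Omega B Δ, 0 < B x x → 0 < B y y →
      (∀ c : ℝ, x ≠ c • y) → DisjointVec B x y) : LevelLE B Δ 2 := by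
  intro K hK z hz
  by_contra! hzz
  obtain ⟨ω, hω, η, hη, hne, horth⟩ := hK.exists_weights_orthogonal hB hΔ hL.1
  obtain ⟨hωz, hηz⟩ := horth z hz
  have spacelike : ∀ x, B x z = 0 → x ≠ 0 → 0 < B x x := fun x hxz =>
    hL.pos_of_orthogonal hB hzz ((hB.eq z x).trans hxz)
  refine (h ω (weights_subset_Omega B Δ hω) η (weights_subset_Omega B Δ hη)
    (spacelike ω hωz hω.choose_spec.ne_zero) (spacelike η hηz hη.choose_spec.ne_zero) hne).2
    fun x hx => spacelike x ?_
  obtain ⟨a, b, rfl⟩ := Submodule.mem_span_pair.1 hx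
  simp [hωz, hηz]

theorem IsLorentz.levelLE_two_iff (hB : B.IsSymm) (hL : IsLorentz B) (hΔ : IsRootBasis B Δ) :
    LevelLE B Δ 2 ↔ ∀ x ∈ Omega B Δ, ∀ y ∈ Omega B Δ, 0 < B x x → 0 < B y y →
      (∀ c : ℝ, x ≠ c • y) → DisjointVec B x y := by
  refine ⟨fun hlev x hx y hy hxx hyy hne => ?_, hL.levelLE_two_of_disjointVec hB hΔ⟩
  refine hlev.disjointVec hB hΔ hL hx hy hxx hyy fun c hc => ?_
  have hc0 : c ≠ 0 := by
    rintro rfl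
    simp [hc] at hyy
  exact hne c⁻¹ ((eq_inv_smul_iff₀ hc0).2 hc.symm)

end Packing

/-- extending Maxwell, Theorem 3.2. For a Lorentzian based root
system, the space-like vectors of `Ω` form a ball packing (i.e. `Ω` contains a
space-like vector and any two non-proportional space-like vectors of `Ω` are
disjoint) if and only if the root system has level `2`. -/
theorem packing_iff_level_two
    {V : Type*} [AddCommGroup V] [Module ℝ V] [FiniteDimensional ℝ V]
    (B : LinearMap.BilinForm ℝ V) (hsymm : ∀ x y : V, B x y = B y x)
    (Δ : Finset V) (hΔ : IsRootBasis B Δ) (hLor : IsLorentz B) :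
    HasLevel B Δ 2 ↔
      ((∃ x ∈ Omega B Δ, 0 < B x x) ∧
        ∀ x ∈ Omega B Δ, ∀ y ∈ Omega B Δ, 0 < B x x → 0 < B y y →
          (∀ c : ℝ, x ≠ c • y) → DisjointVec B x y) := by
  have hB : B.IsSymm := ⟨hsymm⟩
  rw [HasLevel, ← hLor.not_levelLE_one_iff hB hΔ, ← hLor.levelLE_two_iff hB hΔ,
    and_comm]
  refine and_congr_left fun _ => ⟨fun hlt => hlt 1 one_lt_two, fun hlev m hm => ?_⟩
  interval_cases m
  · exact hLor.not_levelLE_zero hΔ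
  · exact hlev

end BoydMaxwell
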